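/- arXiv:1710.03815 — 2 statements merged into one kernel-verified Lean document; each statement's English description precedes it below -/
import Mathlib

section
/- Let 𝒩 be a finite nonempty set of nonempty matroids and k = min_{N ∈ 𝒩} χ(N) − 1. Suppose some N₀ ∈ 𝒩 has a linearly independent subset I with χ(N₀ \ I) ≤ k, and let t be the smallest size of such a linearly independent set (over all choices of N₀ ∈ 𝒩 and I). Then for all sufficiently large n, ex(𝒩, n) = 2ⁿ(1 − 2^{−k}) + ex(𝒟(𝒩), t − 1). -/
open scoped Classical

/-- `M` has an `N`-restriction: some injective linear image of `N` lies inside `M`. -/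
def HasRestriction {α β : Type*} [AddCommMonoid α] [AddCommMonoid β]
    [Module (ZMod 2) α] [Module (ZMod 2) β] (N : Set α) (M : Set β) : Prop :=
  ∃ ψ : α →ₗ[ZMod 2] β, Function.Injective ψ ∧ ψ '' N ⊆ M

/-- The set of distinct `N`-restrictions of `M` (as subsets of `M`). -/
def restrictionSet {α β : Type*} [AddCommMonoid α] [AddCommMonoid β]
    [Module (ZMod 2) α] [Module (ZMod 2) β] (N : Set α) (M : Set β) : Set (Set β) :=
  {S | S ⊆ M ∧ ∃ ψ : α →ₗ[ZMod 2] β, Function.Injective ψ ∧ S = ψ '' N}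

/-- The Turán number for a single excluded matroid `N`. -/
noncomputable def exNum {α : Type*} [AddCommMonoid α] [Module (ZMod 2) α] (N : Set α) (n : ℕ) : ℕ :=
  sSup {m | ∃ M : Set (Fin n → ZMod 2), 0 ∉ M ∧ ¬ HasRestriction N M ∧ M.ncard = m}

/-- The Turán number for a family of excluded matroids. -/
noncomputable def exNumFam (𝒩 : Set (Σ k : ℕ, Set (Fin k → ZMod 2))) (n : ℕ) : ℕ :=
  sSup {m | ∃ M : Set (Fin n → ZMod 2), 0 ∉ M ∧
    (∀ N ∈ 𝒩, ¬ HasRestriction N.2 M) ∧ M.ncard = m}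

/-- The critical number of `M ⊆ 𝔽₂ⁿ`. -/
noncomputable def critNum {n : ℕ} (M : Set (Fin n → ZMod 2)) : ℕ :=
  sInf {c | ∃ φ : (Fin n → ZMod 2) →ₗ[ZMod 2] (Fin c → ZMod 2), ∀ x ∈ M, φ x ≠ 0}

/-- The rank of `M`: dimension of its span. -/
noncomputable def rankM {n : ℕ} (M : Set (Fin n → ZMod 2)) : ℕ :=
  Module.finrank (ZMod 2) (Submodule.span (ZMod 2) M)

/-- `M` is a copy of `N^{n,t}`. -/
def IsCopyNnt {d : ℕ} (N : Set (Fin d → ZMod 2)) (n t : ℕ)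
    (M : Set (Fin n → ZMod 2)) : Prop :=
  ∃ F : Submodule (ZMod 2) (Fin n → ZMod 2), Module.finrank (ZMod 2) F = n - t ∧
    ∃ θ : (Fin d → ZMod 2) →ₗ[ZMod 2] (Fin n → ZMod 2),
      Function.Injective θ ∧ (∀ x, θ x ∈ F) ∧ M = θ '' N ∪ {x | x ∉ F}

/-- The decomposition family `𝒟(𝒩)`. -/
def decompFam (𝒩 : Set (Σ k : ℕ, Set (Fin k → ZMod 2))) (k : ℕ) :
    Set (Σ k : ℕ, Set (Fin k → ZMod 2)) :=
  {D | 0 ∉ D.2 ∧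
    (∃ N ∈ 𝒩, ∃ M : Set (Fin N.1 → ZMod 2), IsCopyNnt D.2 N.1 k M ∧ HasRestriction N.2 M) ∧
    ∀ D' : Σ k : ℕ, Set (Fin k → ZMod 2), 0 ∉ D'.2 →
      (∃ N ∈ 𝒩, ∃ M : Set (Fin N.1 → ZMod 2), IsCopyNnt D'.2 N.1 k M ∧ HasRestriction N.2 M) →
      HasRestriction D'.2 D.2 → HasRestriction D.2 D'.2}

/-- The cycle matroid of a simple graph. -/
def cycleMatroid {V : Type*} [DecidableEq V] (G : SimpleGraph V) : Set (V → ZMod 2) :=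
  {x | ∃ u v, G.Adj u v ∧ x = Pi.single u 1 + Pi.single v 1}

/-!
**Lower bound.** Put a largest `𝒟(𝒩)`-free matroid inside a subspace of codimension `k` and add the
complement of that subspace. A restriction to some `N ∈ 𝒩` would, by the definition of `𝒟(𝒩)`,
leave a member of `𝒟(𝒩)` inside the subspace.

**Upper bound.** Let `M` be `𝒩`-free with at least `2 ^ n - 2 ^ (n - k)` elements. It contains no
blow-up of a projective geometry of dimension `k + 1`, since a matroid of critical number `k + 1`
embeds in such a blow-up. But `M` is dense enough to contain a blow-up of a projective geometry of
dimension `k`; let `L` be its map and `U` the subspace that is blown up. As this blow-up cannot be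
enlarged, the proportions of the cosets `x + L a + U` that are missing from `M` add up to about `1`
for every `x`. By shearing `L`, almost all of this weight sits on a single `a` for most `x`. The
points for which `a = 0` are nearly closed under addition, so a doubling argument gives a subspace
`F` of codimension `k` whose complement is almost contained in `M`. An embedding of some `N ∈ 𝒩`
into `M` can then be built from any member of `𝒟(𝒩)` inside `M ∩ F` by a random extension, so
`M ∩ F` is `𝒟(𝒩)`-free. Finally `𝒟(𝒩)` contains an independent set of size at most `t`, which bounds
the rank of `M ∩ F` by `t - 1`.
-/

open scoped BigOperators

section Density

variable {α ι : Type*} [Fintype α]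

/-- The proportion of the elements of a finite type that lie in `S`. It is encoded as the average
of the indicator function, because the arguments below are double countings. -/
noncomputable def density (S : Set α) : ℝ :=
  𝔼 x, S.indicator 1 x

lemma density_eq_ncard_div (S : Set α) : density S = S.ncard / Fintype.card α := by
  rw [density, Fintype.expect_eq_sum_div_card]
  simp [Set.indicator_apply, Finset.sum_boole, ← Set.ncard_coe_finset]

lemma card_mul_density [Nonempty α] (S : Set α) : Fintype.card α * density S = S.ncard := by
  rw [density_eq_ncard_div]
  field_simp

lemma density_nonneg (S : Set α) : 0 ≤ density S := by
  rw [density_eq_ncard_div]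
  positivity

lemma density_mono {S T : Set α} (h : S ⊆ T) : density S ≤ density T :=
  Finset.expect_le_expect fun _ _ =>
    Set.indicator_le_indicator_of_subset h (fun _ => zero_le_one) _

lemma density_empty : density (∅ : Set α) = 0 := by
  simp [density]

lemma density_univ [Nonempty α] : density (Set.univ : Set α) = 1 := by
  simp [density]

lemma density_compl [Nonempty α] (S : Set α) : density Sᶜ = 1 - density S := by
  simp [density, Set.indicator_compl, Finset.expect_sub_distrib]

lemma density_inter_add_density_diff (S T : Set α) :
    density (S ∩ T) + density (S \ T) = density S := by
  simp only [density_eq_ncard_div, ← add_div]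
  exact_mod_cast congrArg (fun n : ℕ => (n / Fintype.card α : ℝ))
    (Set.ncard_inter_add_ncard_sdiff_eq_ncard S T)

lemma density_compl_diff_le {P F : Set α} (M : Set α) (hPF : P ⊆ F) :
    density (Fᶜ \ M) ≤ density Mᶜ - density (P \ M) := by
  have h := density_mono (Set.inter_subset_inter_right Mᶜ hPF)
  rw [Set.sdiff_eq, Set.inter_comm, ← Set.sdiff_eq, ← density_inter_add_density_diff Mᶜ F,
    Set.sdiff_eq P, Set.inter_comm P]
  linarith

lemma density_iUnion_add_density_inter_le [Fintype ι] (S : ι → Set α) {i j : ι} (hij : i ≠ j) :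
    density (⋃ a, S a) + density (S i ∩ S j) ≤ ∑ a, density (S a) := by
  simp only [density, ← Finset.expect_sum_comm, ← Finset.expect_add_distrib]
  refine Finset.expect_le_expect fun x _ => ?_
  have h0 : ∀ a ∈ Finset.univ, (0 : ℝ) ≤ (S a).indicator 1 x := fun a _ =>
    Set.indicator_nonneg (fun _ _ => zero_le_one) x
  by_cases hx : x ∈ S i ∩ S j
  · have := Finset.add_le_sum h0 (Finset.mem_univ i) (Finset.mem_univ j) hij
    simpa [hx, hx.1, hx.2, Set.mem_iUnion_of_mem i hx.1] using this
  · by_cases hU : x ∈ ⋃ a, S a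
    · obtain ⟨a, ha⟩ := Set.mem_iUnion.1 hU
      have := Finset.single_le_sum h0 (Finset.mem_univ a)
      simpa [hx, hU, ha] using this
    · simpa [hx, hU] using Finset.sum_nonneg h0

lemma density_iUnion_le [Fintype ι] (S : ι → Set α) :
    density (⋃ a, S a) ≤ ∑ a, density (S a) := by
  simp only [density, ← Finset.expect_sum_comm]
  refine Finset.expect_le_expect fun x _ => ?_
  have h0 : ∀ a ∈ Finset.univ, (0 : ℝ) ≤ (S a).indicator 1 x := fun a _ =>
    Set.indicator_nonneg (fun _ _ => zero_le_one) x
  by_cases hU : x ∈ ⋃ a, S a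
  · obtain ⟨a, ha⟩ := Set.mem_iUnion.1 hU
    simpa [hU, ha] using Finset.single_le_sum h0 (Finset.mem_univ a)
  · simpa [hU] using Finset.sum_nonneg h0

lemma density_union_le (S T : Set α) : density (S ∪ T) ≤ density S + density T := by
  simpa [Set.union_eq_iUnion] using density_iUnion_le fun b : Bool => cond b S T

lemma exists_notMem_of_density_lt_one [Nonempty α] {S : Set α} (h : density S < 1) :
    ∃ x, x ∉ S := by
  rw [← Set.ne_univ_iff_exists_notMem]
  rintro rfl
  exact h.ne density_univ

variable {G H : Type*} [AddGroup G] [Fintype G] [AddGroup H] [Fintype H]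

lemma expect_add_right (f : G → ℝ) (c : G) : 𝔼 x, f (x + c) = 𝔼 x, f x :=
  Fintype.expect_equiv (Equiv.addRight c) _ _ fun _ => rfl

lemma expect_add_left (f : G → ℝ) (c : G) : 𝔼 x, f (c + x) = 𝔼 x, f x :=
  Fintype.expect_equiv (Equiv.addLeft c) _ _ fun _ => rfl

lemma density_preimage_add_right (S : Set G) (c : G) : density {x | x + c ∈ S} = density S :=
  expect_add_right (S.indicator 1) c

lemma density_preimage_add_left (S : Set G) (c : G) : density {x | c + x ∈ S} = density S :=
  expect_add_left (S.indicator 1) c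

lemma expect_density_inter_translate (S T : Set G) :
    𝔼 c, density (S ∩ {x | x + c ∈ T}) = density S * density T := by
  have hST (c x : G) : (S ∩ {x | x + c ∈ T}).indicator (1 : G → ℝ) x =
      S.indicator 1 x * T.indicator 1 (x + c) := by
    by_cases hS : x ∈ S <;> by_cases hT : x + c ∈ T <;> simp [hS, hT]
  simp only [density, hST]
  rw [Finset.expect_comm, Finset.expect_mul]
  simp only [← Finset.mul_expect, expect_add_left]

lemma density_preimage_of_surjective (f : G →+ H) (hf : Function.Surjective f) (S : Set H) :
    density (f ⁻¹' S) = density S := by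
  have hshift (h : H) : density (f ⁻¹' S) = 𝔼 g, S.indicator (1 : H → ℝ) (f g + h) := by
    obtain ⟨g₀, rfl⟩ := hf h
    simp only [← map_add]
    exact (expect_add_right (fun g => S.indicator (1 : H → ℝ) (f g)) g₀).symm
  calc density (f ⁻¹' S) = 𝔼 _h : H, density (f ⁻¹' S) := (Fintype.expect_const _).symm
    _ = 𝔼 g, 𝔼 h, S.indicator (1 : H → ℝ) (f g + h) := by
      rw [Finset.expect_comm]
      exact Finset.expect_congr rfl fun h _ => hshift h
    _ = density S := by simp only [expect_add_left, density, Fintype.expect_const]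

end Density

section Flats

lemma exists_notMem_sq_density_le {G : Type*} [AddGroup G] [Fintype G] {T U : Set G}
    (hU : density U < density T / 2) :
    ∃ u ∉ U, density T ^ 2 / 2 ≤ density (T ∩ {x | x + u ∈ T}) := by
  by_contra! h
  have hT : 0 < density T := by linarith [density_nonneg U]
  have hle (c : G) : density (T ∩ {x | x + c ∈ T}) ≤
      density T * U.indicator 1 c + density T ^ 2 / 2 := by
    by_cases hc : c ∈ U
    · have := density_mono (T := T) (Set.inter_subset_left (t := {x | x + c ∈ T}))
      simp only [hc, Set.indicator_of_mem, Pi.one_apply]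
      nlinarith
    · simpa [hc] using (h c hc).le
  have := Finset.expect_le_expect fun c (_ : c ∈ Finset.univ) => hle c
  rw [expect_density_inter_translate, Finset.expect_add_distrib, ← Finset.mul_expect,
    Fintype.expect_const, ← density] at this
  nlinarith [mul_lt_mul_of_pos_left hU hT]

lemma card_eq_two_pow_finrank (V : Type*) [AddCommGroup V] [Module (ZMod 2) V] [Fintype V] :
    Fintype.card V = 2 ^ Module.finrank (ZMod 2) V := by
  simpa using Module.card_eq_pow_finrank (K := ZMod 2) (V := V)

variable {V : Type*} [AddCommGroup V] [Module (ZMod 2) V]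

lemma zmod_two_eq_zero_or_eq_one (c : ZMod 2) : c = 0 ∨ c = 1 := by
  decide +revert

lemma mem_of_mem_sup_span_singleton {K : Submodule (ZMod 2) V} {S : Set V} {u x : V}
    (hx : ∀ b ∈ K, x + b ∈ S) (hxu : ∀ b ∈ K, x + u + b ∈ S) :
    ∀ b ∈ K ⊔ Submodule.span (ZMod 2) {u}, x + b ∈ S := by
  intro b hb
  obtain ⟨b, hbK, _, hc, rfl⟩ := Submodule.mem_sup.1 hb
  obtain ⟨c, rfl⟩ := Submodule.mem_span_singleton.1 hc
  obtain rfl | rfl := zmod_two_eq_zero_or_eq_one c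
  · simpa using hx b hbK
  · simpa [add_assoc, add_comm u] using hxu b hbK

lemma ncard_submodule [Finite V] (K : Submodule (ZMod 2) V) :
    (K : Set V).ncard = 2 ^ Module.finrank (ZMod 2) K := by
  rw [← Nat.card_coe_set_eq]
  simpa using Module.natCard_eq_pow_finrank (K := ZMod 2) (V := K)

variable [Fintype V]

lemma density_submodule (K : Submodule (ZMod 2) V) :
    density (K : Set V) = 2 ^ Module.finrank (ZMod 2) K / 2 ^ Module.finrank (ZMod 2) V := by
  rw [density_eq_ncard_div, ncard_submodule, card_eq_two_pow_finrank]
  norm_cast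

/-- The subset `S` of `V` contains at least `c * card V` pointed affine flats parallel to a common
linear subspace of dimension `s`. -/
def HasDenseFlats (s : ℕ) (c : ℝ) (S : Set V) : Prop :=
  ∃ K : Submodule (ZMod 2) V, Module.finrank (ZMod 2) K = s ∧ c ≤ density {x | ∀ b ∈ K, x + b ∈ S}

lemma HasDenseFlats.succ {s : ℕ} {c : ℝ} {S : Set V} (hc : 0 < c)
    (hS : HasDenseFlats s c S)
    (hV : 2 ^ s / 2 ^ Module.finrank (ZMod 2) V < c / 2) : HasDenseFlats (s + 1) (c ^ 2 / 2) S := by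
  obtain ⟨K, rfl, hcK⟩ := hS
  have hK : density (K : Set V) < density {x | ∀ b ∈ K, x + b ∈ S} / 2 := by
    rw [density_submodule]
    linarith
  obtain ⟨u, hu, hdens⟩ := exists_notMem_sq_density_le hK
  refine ⟨K ⊔ Submodule.span (ZMod 2) {u}, Submodule.finrank_sup_span_singleton hu, ?_⟩
  calc c ^ 2 / 2 ≤ density {x | ∀ b ∈ K, x + b ∈ S} ^ 2 / 2 := by gcongr
    _ ≤ _ := hdens
    _ ≤ _ := density_mono fun x hx => mem_of_mem_sup_span_singleton hx.1 hx.2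

lemma exists_two_pow_div_two_pow_lt (s : ℕ) {c : ℝ} (hc : 0 < c) :
    ∃ n₀ : ℕ, ∀ n ≥ n₀, (2 : ℝ) ^ s / 2 ^ n < c := by
  obtain ⟨n₀, h⟩ := exists_pow_lt_of_lt_one (div_pos hc (pow_pos two_pos s))
    (one_half_lt_one (α := ℝ))
  refine ⟨n₀, fun n hn => ?_⟩
  rw [lt_div_iff₀ (by positivity)] at h
  calc (2 : ℝ) ^ s / 2 ^ n ≤ 2 ^ s / 2 ^ n₀ := by gcongr; norm_num
    _ = (1 / 2) ^ n₀ * 2 ^ s := by rw [one_div_pow]; ring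
    _ < c := h

theorem exists_hasDenseFlats.{u} (s : ℕ) {δ : ℝ} (hδ : 0 < δ) : ∃ c > 0, ∃ n₀ : ℕ,
    ∀ (V : Type u) [AddCommGroup V] [Module (ZMod 2) V] [Fintype V],
      n₀ ≤ Module.finrank (ZMod 2) V → ∀ S : Set V, δ ≤ density S → HasDenseFlats s c S := by
  induction s with
  | zero => exact ⟨δ, hδ, 0, fun V _ _ _ _ S hS => ⟨⊥, finrank_bot _ _, by simpa using hS⟩⟩
  | succ s ih =>
    obtain ⟨c, hc, n₁, ih⟩ := ih
    obtain ⟨n₂, hn₂⟩ := exists_two_pow_div_two_pow_lt s (half_pos hc)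
    refine ⟨c ^ 2 / 2, by positivity, max n₁ n₂, fun V _ _ _ hV S hS => ?_⟩
    exact (ih V (le_of_max_le_left hV) S hS).succ hc (hn₂ _ (le_of_max_le_right hV))

/-- Every subset of `V` of density at least `δ` contains an affine flat of dimension `s`. -/
def DenseSetsHaveFlats (V : Type*) [AddCommGroup V] [Module (ZMod 2) V] [Fintype V]
    (s : ℕ) (δ : ℝ) : Prop :=
  ∀ S : Set V, δ ≤ density S →
    ∃ K : Submodule (ZMod 2) V, Module.finrank (ZMod 2) K = s ∧ ∃ x, ∀ b ∈ K, x + b ∈ S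

theorem exists_denseSetsHaveFlats.{u} (s : ℕ) {δ : ℝ} (hδ : 0 < δ) : ∃ n₀ : ℕ,
    ∀ (V : Type u) [AddCommGroup V] [Module (ZMod 2) V] [Fintype V],
      n₀ ≤ Module.finrank (ZMod 2) V → DenseSetsHaveFlats V s δ := by
  obtain ⟨c, hc, n₀, h⟩ := exists_hasDenseFlats.{u} s hδ
  refine ⟨n₀, fun V _ _ _ hV S hS => ?_⟩
  obtain ⟨K, hK, hcK⟩ := h V hV S hS
  obtain ⟨x, hx⟩ : {x | ∀ b ∈ K, x + b ∈ S}.Nonempty := by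
    by_contra! hempty
    rw [hempty, density_empty] at hcK
    linarith
  exact ⟨K, hK, x, hx⟩

end Flats

section Blowups

variable {A V : Type*} [AddCommGroup A] [Module (ZMod 2) A] [AddCommGroup V] [Module (ZMod 2) V]
  {M : Set V} {U : Submodule (ZMod 2) V} {L : A →ₗ[ZMod 2] V}

/-- The cosets of `U` through the nonzero values of `L` are contained in `M`. If `M` contains
neither `0` nor any element of `U`, this says that `M` contains a copy of `∅^{n,j}`, where `j` and
`n - j` are the dimensions of `A` and of `U`. -/
def IsBlowup (M : Set V) (U : Submodule (ZMod 2) V) (L : A →ₗ[ZMod 2] V) : Prop :=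
  ∀ a ≠ 0, ∀ u ∈ U, L a + u ∈ M

/-- `M` contains a blow-up of the projective geometry of dimension `j` by a linear subspace of
dimension `s`. -/
def HasBlowup (j s : ℕ) (M : Set V) : Prop :=
  ∃ U : Submodule (ZMod 2) V, Module.finrank (ZMod 2) U = s ∧
    ∃ L : (Fin j → ZMod 2) →ₗ[ZMod 2] V, IsBlowup M U L

lemma IsBlowup.hasBlowup [Module.Finite (ZMod 2) A] (h : IsBlowup M U L) :
    HasBlowup (Module.finrank (ZMod 2) A) (Module.finrank (ZMod 2) U) M := by
  let e : (Fin (Module.finrank (ZMod 2) A) → ZMod 2) ≃ₗ[ZMod 2] A :=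
    LinearEquiv.ofFinrankEq _ _ (by simp)
  exact ⟨U, rfl, L ∘ₗ e, fun a ha => h (e a) (by simpa using ha)⟩

lemma IsBlowup.hasBlowup_succ [Module.Finite (ZMod 2) A] (h : IsBlowup M U L)
    {K : Submodule (ZMod 2) V} (hK : K ≤ U) {v : V} (hv : ∀ a, ∀ u ∈ K, v + L a + u ∈ M) :
    HasBlowup (Module.finrank (ZMod 2) A + 1) (Module.finrank (ZMod 2) K) M := by
  have hb : IsBlowup M K (L.coprod (LinearMap.toSpanSingleton (ZMod 2) V v)) := by
    rintro ⟨a, c⟩ hac u hu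
    obtain rfl | rfl := zmod_two_eq_zero_or_eq_one c
    · simpa using h a (by simpa using hac) u (hK hu)
    · simpa [add_comm v] using hv a u hu
  simpa using hb.hasBlowup

lemma IsBlowup.add_smulRight (h : IsBlowup M U L) (l : A →ₗ[ZMod 2] ZMod 2) {c : V} (hc : c ∈ U) :
    IsBlowup M U (L + l.smulRight c) := fun a ha u hu => by
  simpa [add_assoc] using h a ha (l a • c + u) (U.add_mem (U.smul_mem _ hc) hu)

lemma exists_dual_apply_eq_one {w : A} (hw : w ≠ 0) : ∃ l : A →ₗ[ZMod 2] ZMod 2, l w = 1 := by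
  obtain ⟨l, hl⟩ : ∃ l : A →ₗ[ZMod 2] ZMod 2, l w ≠ 0 := by
    by_contra! hl
    exact hw ((Module.forall_dual_apply_eq_zero_iff (ZMod 2) w).1 hl)
  exact ⟨l, Fin.eq_one_of_ne_zero _ hl⟩

lemma exists_submodule_le_finrank_eq (K : Submodule (ZMod 2) V) {s : ℕ}
    (hs : s ≤ Module.finrank (ZMod 2) K) : ∃ U ≤ K, Module.finrank (ZMod 2) U = s := by
  obtain ⟨f, hf⟩ := exists_linearIndependent_of_le_finrank (R := ZMod 2) hs
  refine ⟨Submodule.span (ZMod 2) (Set.range fun i => (f i : V)), ?_, ?_⟩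
  · exact Submodule.span_le.2 (Set.range_subset_iff.2 fun i => (f i).2)
  · exact (finrank_span_eq_card (hf.map' K.subtype K.ker_subtype)).trans (Fintype.card_fin s)

lemma IsBlowup.coprod_add_smulRight {K : Submodule (ZMod 2) V} (h : IsBlowup M K L) {w : A}
    {l : A →ₗ[ZMod 2] ZMod 2} (hl : l w = 1) {x₁ x₂ : V}
    (h₁ : ∀ a ≠ 0, ∀ u ∈ K, x₁ + L a + u ∈ M) (h₂ : ∀ a ≠ 0, ∀ u ∈ K, x₂ + L a + u ∈ M)
    (h₁₂ : ∀ a ≠ 0, ∀ u ∈ K, x₁ + x₂ + L w + L a + u ∈ M) :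
    IsBlowup M K
      ((L + l.smulRight x₁).coprod (LinearMap.toSpanSingleton (ZMod 2) V (x₁ + x₂))) := by
  rintro ⟨a, c⟩ hac u hu
  have ha1 (hla : l a = 1) : a ≠ 0 := by
    rintro rfl
    simp at hla
  obtain rfl | rfl := zmod_two_eq_zero_or_eq_one c <;>
    obtain hla | hla := zmod_two_eq_zero_or_eq_one (l a)
  · simpa [hla] using h a (by simpa using hac) u hu
  · simpa [hla, add_comm x₁] using h₁ a (ha1 hla) u hu
  · have haw : a - w ≠ 0 := by
      rintro haw
      simp [sub_eq_zero.1 haw, hl] at hla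
    simpa [hla, add_comm (L a), add_assoc (x₁ + x₂)] using h₁₂ (a - w) haw u hu
  · have hx : L a + x₁ + (x₁ + x₂) + u = x₂ + L a + u := by
      rw [add_assoc (L a), ← add_assoc x₁, ZModModule.add_self, zero_add, add_comm (L a)]
    simpa [hla, hx] using h₂ a (ha1 hla) u hu

variable [Fintype V]

/-- The proportion of the coset `x + U` that is missing from `M`. -/
noncomputable def missDensity (M : Set V) (U : Submodule (ZMod 2) V) (x : V) : ℝ :=
  density {u : U | x + u ∉ M}

lemma missDensity_nonneg (M : Set V) (U : Submodule (ZMod 2) V) (x : V) :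
    0 ≤ missDensity M U x :=
  density_nonneg _

lemma missDensity_add_of_mem (x : V) {u : V} (hu : u ∈ U) :
    missDensity M U (x + u) = missDensity M U x := by
  simpa [missDensity, add_assoc] using
    density_preimage_add_left {e : U | x + e ∉ M} ⟨u, hu⟩

lemma expect_missDensity (M : Set V) (U : Submodule (ZMod 2) V) :
    𝔼 x, missDensity M U x = density Mᶜ := by
  have h (x : V) : missDensity M U x = 𝔼 u : U, Mᶜ.indicator (1 : V → ℝ) (x + u) := rfl
  simp only [h]
  rw [Finset.expect_comm]
  simp only [expect_add_right, Fintype.expect_const, density]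

variable {s : ℕ} {δ : ℝ}

lemma IsBlowup.one_sub_lt_density_iUnion [Finite A] (h : IsBlowup M U L)
    (hU : DenseSetsHaveFlats U s δ)
    (hM : ¬ HasBlowup (Module.finrank (ZMod 2) A + 1) s M) (y : V) :
    1 - δ < density (⋃ a, {e : U | y + L a + e ∉ M}) := by
  rw [sub_lt_comm, ← density_compl]
  by_contra! hδ
  obtain ⟨K, rfl, x, hx⟩ := hU _ hδ
  have := h.hasBlowup_succ (K := K.map U.subtype) (v := y + x)
      (U.map_subtype_le K) fun a u hu => by
    obtain ⟨b, hb, rfl⟩ := Submodule.mem_map.1 hu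
    have := hx b hb
    simp only [Set.compl_iUnion, Set.mem_iInter, Set.mem_compl_iff, Set.mem_ofPred_eq, not_not,
      Submodule.coe_add] at this
    simpa [add_assoc, add_left_comm, add_comm] using this a
  rw [Submodule.finrank_map_subtype_eq] at this
  exact hM this

variable [Fintype A]

lemma expect_sum_missDensity (M : Set V) (U : Submodule (ZMod 2) V) (L : A →ₗ[ZMod 2] V) :
    𝔼 y, ∑ a, missDensity M U (y + L a) = Fintype.card A * density Mᶜ := by
  simp [Finset.expect_sum_comm, expect_add_right, expect_missDensity]

lemma IsBlowup.one_sub_lt_sum_missDensity (h : IsBlowup M U L) (hU : DenseSetsHaveFlats U s δ)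
    (hM : ¬ HasBlowup (Module.finrank (ZMod 2) A + 1) s M) (y : V) :
    1 - δ < ∑ a, missDensity M U (y + L a) :=
  (h.one_sub_lt_density_iUnion hU hM y).trans_le (density_iUnion_le _)

/-- Shearing `L` by a functional that is `1` at `w` translates the miss set of the coset
`y + L w + U` relative to that of `y + U`; on average the two then overlap as if independent. -/
lemma IsBlowup.missDensity_mul_missDensity_le (h : IsBlowup M U L)
    (hU : DenseSetsHaveFlats U s δ) (hM : ¬ HasBlowup (Module.finrank (ZMod 2) A + 1) s M)
    (y : V) {w : A} (hw : w ≠ 0) :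
    missDensity M U y * missDensity M U (y + L w) ≤
      ∑ a, missDensity M U (y + L a) - (1 - δ) := by
  obtain ⟨l, hlw⟩ := exists_dual_apply_eq_one hw
  rw [missDensity, missDensity, ← expect_density_inter_translate]
  refine Finset.expect_le Finset.univ_nonempty fun c _ => ?_
  let S (a : A) : Set U := {e | y + (L + l.smulRight (c : V)) a + e ∉ M}
  have hS (a : A) : density (S a) = missDensity M U (y + L a) := by
    rw [← missDensity_add_of_mem (y + L a) (U.smul_mem (l a) c.2), add_assoc y]
    rfl
  have hcover := (h.add_smulRight l c.2).one_sub_lt_density_iUnion hU hM y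
  have hinter := density_iUnion_add_density_inter_le S hw.symm
  have hSw : S 0 ∩ S w = {e : U | y + e ∉ M} ∩ {e | e + c ∈ {e : U | y + L w + e ∉ M}} := by
    ext e
    simp [S, hlw, add_assoc, add_comm (e : V)]
  simp only [hS, hSw] at hinter
  linarith

theorem exists_hasBlowup.{u} (j s : ℕ) {γ : ℝ} (hγ : 0 < γ) : ∃ n₀ : ℕ,
    ∀ (V : Type u) [AddCommGroup V] [Module (ZMod 2) V] [Fintype V],
      n₀ ≤ Module.finrank (ZMod 2) V →
        ∀ M : Set V, 2 ^ j * density Mᶜ ≤ 2 - γ → HasBlowup j s M := by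
  induction j generalizing s γ with
  | zero =>
    refine ⟨s, fun V _ _ _ hV M _ => ?_⟩
    obtain ⟨U, -, hU⟩ := exists_submodule_le_finrank_eq (⊤ : Submodule (ZMod 2) V)
      (by simpa using hV)
    exact ⟨U, hU, 0, fun a ha => (ha (Subsingleton.elim a 0)).elim⟩
  | succ j ih =>
    obtain ⟨d, hd⟩ := exists_denseSetsHaveFlats.{u} s (half_pos hγ)
    obtain ⟨n₀, hn₀⟩ := ih d one_pos
    refine ⟨n₀, fun V _ _ _ hV M hM => ?_⟩
    rw [pow_succ] at hM
    obtain ⟨U, hU, L, hL⟩ := hn₀ V hV M (by linarith)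
    by_contra hno
    have hlt (y : V) : 1 - γ / 2 < ∑ a, missDensity M U (y + L a) :=
      hL.one_sub_lt_sum_missDensity (hd U hU.ge) (by simpa using hno) y
    obtain ⟨y, -, hy⟩ := Finset.exists_le_of_expect_le Finset.univ_nonempty
      (expect_sum_missDensity M U L).le
    have hcard : (Fintype.card (Fin j → ZMod 2) : ℝ) = 2 ^ j := by simp
    rw [hcard] at hy
    linarith [hlt y]

end Blowups

section NearSubspace

open scoped Pointwise

variable {V : Type*} [AddCommGroup V] [Module (ZMod 2) V]

lemma exists_submodule_eq_add_self [Finite V] (T : Set V) (hT : 2 * (T + T).ncard < 3 * T.ncard) :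
    ∃ F : Submodule (ZMod 2) V, (F : Set V) = T + T := by
  have := Fintype.ofFinite V
  let A : Finset (Multiplicative V) := T.toFinset
  have hA : (A : Set (Multiplicative V)) = T := T.coe_toFinset
  have hAA : ((A * A : Finset _) : Set (Multiplicative V)) = (T + T : Set V) := by
    rw [Finset.coe_mul, hA]
    rfl
  have hinv : A⁻¹ = A := by
    rw [← Finset.coe_inj, Finset.coe_inv]
    ext x
    exact iff_of_eq (congrArg (· ∈ (A : Set (Multiplicative V)))
      (ZModModule.neg_eq_self (x.toAdd : V)))
  have hdoubling : ((A * A).card : ℚ) < (3 / 2 : ℚ) * A.card := by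
    have hcA : A.card = T.ncard := (Set.ncard_coe_finset A).symm.trans (congrArg Set.ncard hA)
    have hcAA : (A * A).card = (T + T).ncard :=
      (Set.ncard_coe_finset (A * A)).symm.trans (congrArg Set.ncard hAA)
    rw [hcA, hcAA]
    qify at hT
    linarith
  refine ⟨(A.invMulSubgroup hdoubling).toAddSubgroup'.toZModSubmodule 2, Eq.trans ?_ hAA⟩
  change ((A.invMulSubgroup hdoubling : Subgroup (Multiplicative V)) : Set (Multiplicative V)) = _
  rw [Finset.invMulSubgroup_eq_inv_mul, hinv, ← Finset.coe_mul]

variable [Fintype V]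

lemma exists_submodule_between {T B : Set V} (hT : ∀ x ∈ T, ∀ y ∈ T, x + y ∈ T ∪ B)
    (hB : 4 * density B < density T) :
    ∃ F : Submodule (ZMod 2) V, T ⊆ F ∧ (F : Set V) ⊆ T ∪ B := by
  have hTT : T + T ⊆ T ∪ B := Set.add_subset_iff.2 hT
  have hcard : 2 * (T + T).ncard < 3 * T.ncard := by
    have h := (density_mono hTT).trans (density_union_le T B)
    rify
    simp only [← card_mul_density]
    have hV : (0 : ℝ) < Fintype.card V := by positivity
    nlinarith [density_nonneg B]
  obtain ⟨F, hF⟩ := exists_submodule_eq_add_self T hcard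
  have hTF : density T ≤ density (F : Set V) := by
    obtain ⟨x, hx⟩ : T.Nonempty := by
      by_contra! hempty
      rw [hempty, density_empty] at hB
      linarith [density_nonneg B]
    rw [hF, ← density_preimage_add_left (T + T) x]
    exact density_mono fun y hy => Set.add_mem_add hx hy
  obtain ⟨x, hxF, hxT⟩ : ((F : Set V) ∩ T).Nonempty := by
    by_contra! hdisj
    have hFB : (F : Set V) ⊆ B := fun x hx =>
      (hTT (hF ▸ hx)).resolve_left fun hxT => (hdisj ▸ ⟨hx, hxT⟩ : x ∈ (∅ : Set V))
    linarith [density_mono hFB, density_nonneg B]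
  refine ⟨F, fun y hy => ?_, hF.trans_subset hTT⟩
  have hxy : x + y ∈ F := SetLike.mem_coe.1 (hF ▸ Set.add_mem_add hxT hy)
  exact (F.add_mem_iff_right hxF).1 hxy

end NearSubspace

section Stability

variable {A V : Type*} [AddCommGroup A] [Module (ZMod 2) A] [AddCommGroup V] [Module (ZMod 2) V]
  [Fintype V] {M : Set V} {U : Submodule (ZMod 2) V} {L : A →ₗ[ZMod 2] V}
  {s : ℕ} {δ δ₁ η : ℝ}

/-- The points `x` such that `M` misses a proportion of at most `η` of each coset `x + L w + U` with
`w ≠ 0`, so that everything that is missing near `x` is concentrated on `x + U`. For an extremal `M`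
these points nearly form the linear subspace whose complement approximates `M`. -/
def peaked (M : Set V) (U : Submodule (ZMod 2) V) (L : A →ₗ[ZMod 2] V) (η : ℝ) : Set V :=
  {x | ∀ w ≠ 0, missDensity M U (x + L w) ≤ η}

/-- The points `y` such that the cosets `y + L a + U` have a total proportion of more than `1 + δ`
missing from `M`. The average of this total is at most `1` if `2 ^ k * density Mᶜ ≤ 1`, where `k` is
the dimension of `A`, and no value is much smaller than `1`, so that few points are crowded. -/
def crowded [Fintype A] (M : Set V) (U : Submodule (ZMod 2) V) (L : A →ₗ[ZMod 2] V) (δ : ℝ) :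
    Set V :=
  {y | 1 + δ < ∑ a, missDensity M U (y + L a)}

lemma add_mem_peaked {x u : V} (hx : x ∈ peaked M U L η) (hu : u ∈ U) :
    x + u ∈ peaked M U L η := fun w hw => by
  rw [add_right_comm, missDensity_add_of_mem _ hu]
  exact hx w hw

lemma expect_indicator_missDensity {P : Set V} (hP : ∀ x ∈ P, ∀ u ∈ U, x + u ∈ P) :
    𝔼 x, P.indicator (missDensity M U) x = density (P \ M) := by
  have hiff (x : V) (u : U) : x + u ∈ P ↔ x ∈ P :=
    ⟨fun h => by simpa using hP _ h _ (U.neg_mem u.2), fun h => hP _ h _ u.2⟩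
  have h (x : V) : P.indicator (missDensity M U) x =
      𝔼 u : U, (P \ M).indicator (1 : V → ℝ) (x + u) := by
    by_cases hx : x ∈ P
    · simp only [hx, Set.indicator_of_mem, missDensity, density]
      refine Finset.expect_congr rfl fun u _ => ?_
      simp [Set.indicator_apply, hiff, hx]
    · simp [hiff, hx]
  simp only [h]
  rw [Finset.expect_comm]
  simp only [expect_add_right, Fintype.expect_const, density]

variable [Fintype A]

lemma density_setOf_notMem_le_of_mem_peaked {x : V} (hx : x ∈ peaked M U L η) (hη : 0 ≤ η)
    {K : Submodule (ZMod 2) V} (hK : K ≤ U) :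
    density {e : U | ∃ a ≠ 0, ∃ u ∈ K, x + e + L a + u ∉ M} ≤
      Fintype.card A * 2 ^ Module.finrank (ZMod 2) K * η := by
  let S (i : A × K) : Set U := {e | i.1 ≠ 0 ∧ x + L i.1 + i.2 + e ∉ M}
  have hS (i : A × K) : density (S i) ≤ η := by
    by_cases hi : i.1 = 0
    · simpa [S, hi, density_empty] using hη
    · have := hx i.1 hi
      rw [← missDensity_add_of_mem _ (hK i.2.2)] at this
      simpa [S, hi, missDensity] using this
  have hsub : {e : U | ∃ a ≠ 0, ∃ u ∈ K, x + e + L a + u ∉ M} ⊆ ⋃ i, S i := by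
    rintro e ⟨a, ha, u, hu, he⟩
    refine Set.mem_iUnion.2 ⟨(a, ⟨u, hu⟩), ha, ?_⟩
    rwa [add_right_comm _ u, add_right_comm _ (L a)]
  calc density _ ≤ density (⋃ i, S i) := density_mono hsub
    _ ≤ ∑ _i : A × K, η := (density_iUnion_le S).trans (Finset.sum_le_sum fun i _ => hS i)
    _ = _ := by simp [card_eq_two_pow_finrank K]

lemma IsBlowup.hasBlowup_succ_of_mem_peaked (h : IsBlowup M U L)
    (hs : s ≤ Module.finrank (ZMod 2) U) (hη0 : 0 ≤ η) (hη : 2 * (Fintype.card A * 2 ^ s * η) < 1)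
    {x₁ x₂ : V} (h₁ : x₁ ∈ peaked M U L η) (h₂ : x₂ ∈ peaked M U L η) {w : A} (hw : w ≠ 0)
    (h₁₂ : x₁ + x₂ + L w ∈ peaked M U L η) :
    HasBlowup (Module.finrank (ZMod 2) A + 1) s M := by
  obtain ⟨l, hl⟩ := exists_dual_apply_eq_one hw
  obtain ⟨K, hKU, hK⟩ := exists_submodule_le_finrank_eq U hs
  let bad (x : V) : Set U := {e | ∃ a ≠ 0, ∃ u ∈ K, x + e + L a + u ∉ M}
  have hbad {x : V} (hx : x ∈ peaked M U L η) : 2 * density (bad x) < 1 := by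
    have := density_setOf_notMem_le_of_mem_peaked hx hη0 hKU
    rw [hK] at this
    linarith
  obtain ⟨e₁, he₁⟩ := exists_notMem_of_density_lt_one (S := bad x₁)
    (by linarith [hbad h₁, density_nonneg (bad x₁)])
  have h₁₂' : x₁ + x₂ + L w + e₁ ∈ peaked M U L η := add_mem_peaked h₁₂ e₁.2
  obtain ⟨e₂, he₂⟩ := exists_notMem_of_density_lt_one (S := bad x₂ ∪ bad (x₁ + x₂ + L w + e₁))
    (by linarith [hbad h₂, hbad h₁₂', density_union_le (bad x₂) (bad (x₁ + x₂ + L w + e₁))])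
  simp only [bad, Set.mem_union, Set.mem_ofPred_eq, not_or, not_exists, not_and, not_not] at he₁ he₂
  have hblow := IsBlowup.coprod_add_smulRight (fun a ha u hu => h a ha u (hKU hu)) hl he₁ he₂.1
    (by simpa [add_assoc, add_left_comm, add_comm] using he₂.2)
  simpa [hK] using hblow.hasBlowup

lemma IsBlowup.exists_add_mem_peaked (h : IsBlowup M U L) (hU : DenseSetsHaveFlats U s δ₁)
    (hM : ¬ HasBlowup (Module.finrank (ZMod 2) A + 1) s M) (hδ₁ : δ₁ ≤ 1 / 2) (hδ : δ₁ ≤ δ)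
    (hη : 4 * Fintype.card A * δ ≤ η) {y : V} (hy : y ∉ crowded M U L δ) :
    ∃ u, y + L u ∈ peaked M U L η := by
  obtain ⟨u, -, hu⟩ : ∃ u ∈ Finset.univ,
      (1 / (2 * Fintype.card A) : ℝ) < missDensity M U (y + L u) :=
    Finset.exists_lt_of_sum_lt <| by
      have hsum := h.one_sub_lt_sum_missDensity hU hM y
      simp only [Finset.sum_const, Finset.card_univ, nsmul_eq_mul]
      field_simp
      linarith
  refine ⟨u, fun w hw => ?_⟩
  have hshift : ∑ a, missDensity M U (y + L u + L a) = ∑ a, missDensity M U (y + L a) :=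
    Fintype.sum_equiv (Equiv.addLeft u) _ _ fun a => by simp [add_assoc]
  have hle := h.missDensity_mul_missDensity_le hU hM (y + L u) hw
  rw [hshift] at hle
  have hy' : ∑ a, missDensity M U (y + L a) ≤ 1 + δ := not_lt.1 hy
  have hnonneg := missDensity_nonneg M U (y + L u + L w)
  calc missDensity M U (y + L u + L w)
      = 2 * Fintype.card A * (1 / (2 * Fintype.card A) * missDensity M U (y + L u + L w)) := by
        field_simp
    _ ≤ 2 * Fintype.card A * (missDensity M U (y + L u) * missDensity M U (y + L u + L w)) := by
        exact mul_le_mul_of_nonneg_left (mul_le_mul_of_nonneg_right hu.le hnonneg) (by positivity)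
    _ ≤ 2 * Fintype.card A * (2 * δ) :=
        mul_le_mul_of_nonneg_left (by linarith) (by positivity)
    _ ≤ η := by linarith

lemma IsBlowup.add_mem_peaked_union_crowded (h : IsBlowup M U L)
    (hU : DenseSetsHaveFlats U s δ₁) (hM : ¬ HasBlowup (Module.finrank (ZMod 2) A + 1) s M)
    (hs : s ≤ Module.finrank (ZMod 2) U) (hδ₁ : δ₁ ≤ 1 / 2) (hδ : δ₁ ≤ δ)
    (hδη : 4 * Fintype.card A * δ ≤ η) (hη0 : 0 ≤ η) (hη : 2 * (Fintype.card A * 2 ^ s * η) < 1)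
    {x₁ x₂ : V} (h₁ : x₁ ∈ peaked M U L η) (h₂ : x₂ ∈ peaked M U L η) :
    x₁ + x₂ ∈ peaked M U L η ∪ crowded M U L δ := by
  by_cases hc : x₁ + x₂ ∈ crowded M U L δ
  · exact Or.inr hc
  · obtain ⟨w, hw⟩ := h.exists_add_mem_peaked hU hM hδ₁ hδ hδη hc
    obtain rfl | hw0 := eq_or_ne w 0
    · exact Or.inl (by simpa using hw)
    · exact (hM (h.hasBlowup_succ_of_mem_peaked hs hη0 hη h₁ h₂ hw0 hw)).elim

lemma density_crowded_mul_le (hsum : ∀ y, 1 - δ₁ < ∑ a, missDensity M U (y + L a))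
    (hM : Fintype.card A * density Mᶜ ≤ 1) (hδ₁ : 0 ≤ δ₁) :
    density (crowded M U L δ) * δ ≤ δ₁ := by
  have hle (y : V) : δ * (crowded M U L δ).indicator 1 y + (1 - δ₁) ≤
      ∑ a, missDensity M U (y + L a) := by
    by_cases hy : y ∈ crowded M U L δ
    · have : 1 + δ < ∑ a, missDensity M U (y + L a) := hy
      simp only [hy, Set.indicator_of_mem, Pi.one_apply]
      linarith
    · simpa [hy] using (hsum y).le
  have := Finset.expect_le_expect fun y (_ : y ∈ Finset.univ) => hle y
  rw [expect_sum_missDensity, Finset.expect_add_distrib, ← Finset.mul_expect,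
    Fintype.expect_const, ← density] at this
  linarith

lemma le_missDensity_of_mem_peaked {x : V} (hx : x ∈ peaked M U L η) (hη : 0 ≤ η)
    (hsum : 1 - δ₁ < ∑ a, missDensity M U (x + L a)) :
    1 - δ₁ - Fintype.card A * η ≤ missDensity M U x := by
  have hle (a : A) (_ : a ∈ Finset.univ) : missDensity M U (x + L a) ≤
      (if a = 0 then missDensity M U x else 0) + η := by
    by_cases ha : a = 0
    · simpa [ha] using hη
    · simpa [ha] using hx a ha
  have := Finset.sum_le_sum hle
  simp only [Finset.sum_add_distrib, Finset.sum_ite_eq', Finset.mem_univ, if_true,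
    Finset.sum_const, Finset.card_univ, nsmul_eq_mul] at this
  linarith

lemma card_mul_density_le_one {P : Set V} (hP : ∀ x ∈ P, ∀ w ≠ 0, x + L w ∉ P) :
    Fintype.card A * density P ≤ 1 := by
  have hle (y : V) : ∑ a, P.indicator (1 : V → ℝ) (y + L a) ≤ 1 := by
    by_cases hy : ∃ a, y + L a ∈ P
    · obtain ⟨a, ha⟩ := hy
      rw [Finset.sum_eq_single a, Set.indicator_of_mem ha, Pi.one_apply]
      · intro b _ hba
        have := hP _ ha (b - a) (sub_ne_zero.2 hba)
        rw [map_sub, add_assoc, add_sub_cancel] at this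
        exact Set.indicator_of_notMem this _
      · simp
    · push Not at hy
      simp [hy]
  calc Fintype.card A * density P = 𝔼 y, ∑ a, P.indicator (1 : V → ℝ) (y + L a) := by
        simp [Finset.expect_sum_comm, expect_add_right, density]
    _ ≤ 1 := Finset.expect_le Finset.univ_nonempty fun y _ => hle y

lemma one_le_card_mul_density_add {P Q : Set V} (h : ∀ y ∉ Q, ∃ a, y + L a ∈ P) :
    1 ≤ Fintype.card A * density P + density Q := by
  have hU : (Set.univ : Set V) ⊆ (⋃ a, {y | y + L a ∈ P}) ∪ Q := fun y _ => by
    by_cases hy : y ∈ Q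
    · exact Or.inr hy
    · exact Or.inl (Set.mem_iUnion.2 (h y hy))
  calc 1 = density (Set.univ : Set V) := density_univ.symm
    _ ≤ density (⋃ a, {y | y + L a ∈ P}) + density Q :=
      (density_mono hU).trans (density_union_le _ _)
    _ ≤ ∑ a, density {y | y + L a ∈ P} + density Q := by gcongr; exact density_iUnion_le _
    _ = Fintype.card A * density P + density Q := by simp [density_preimage_add_right]

lemma mul_density_peaked_le_density_diff (hη : 0 ≤ η)
    (hsum : ∀ y, 1 - δ₁ < ∑ a, missDensity M U (y + L a)) :
    (1 - δ₁ - Fintype.card A * η) * density (peaked M U L η) ≤ density (peaked M U L η \ M) := by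
  rw [← expect_indicator_missDensity fun x hx u => add_mem_peaked hx, density, Finset.mul_expect]
  refine Finset.expect_le_expect fun x _ => ?_
  by_cases hx : x ∈ peaked M U L η
  · simpa [hx] using le_missDensity_of_mem_peaked hx hη (hsum x)
  · simp [hx]

lemma card_mul_density_compl_diff_le {θ : ℝ} {F : Set V} (hMc : Fintype.card A * density Mᶜ ≤ 1)
    (hη : 0 ≤ η) (hsum : ∀ y, 1 - δ₁ < ∑ a, missDensity M U (y + L a)) (hδ₁0 : 0 ≤ δ₁)
    (hδ₁ : δ₁ + Fintype.card A * η ≤ 1)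
    (hθ : 1 - θ ≤ Fintype.card A * density (peaked M U L η)) (hθ0 : 0 ≤ θ)
    (hF : peaked M U L η ⊆ F) :
    Fintype.card A * density (Fᶜ \ M) ≤ δ₁ + Fintype.card A * η + θ := by
  set q : ℝ := (Fintype.card A : ℝ)
  have hq : 0 ≤ q := Nat.cast_nonneg _
  calc q * density (Fᶜ \ M) ≤ q * (density Mᶜ - density (peaked M U L η \ M)) := by
        gcongr
        exact density_compl_diff_le M hF
    _ ≤ 1 - (1 - (δ₁ + q * η)) * (q * density (peaked M U L η)) := by
        have := mul_le_mul_of_nonneg_left (mul_density_peaked_le_density_diff hη hsum) hq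
        linarith
    _ ≤ 1 - (1 - (δ₁ + q * η)) * (1 - θ) := by
        gcongr
    _ ≤ δ₁ + q * η + θ := by linarith [mul_nonneg (by positivity : 0 ≤ δ₁ + q * η) hθ0]

lemma finrank_add_finrank_eq_of_density {F : Submodule (ZMod 2) V}
    (hlb : 1 / 2 < Fintype.card A * density (F : Set V))
    (hub : Fintype.card A * density (F : Set V) < 2) :
    Module.finrank (ZMod 2) F + Module.finrank (ZMod 2) A = Module.finrank (ZMod 2) V := by
  have hA : (Fintype.card A : ℝ) = 2 ^ Module.finrank (ZMod 2) A := by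
    exact_mod_cast card_eq_two_pow_finrank A
  rw [hA, density_submodule, ← mul_div_assoc, ← pow_add] at hlb hub
  rw [div_lt_iff₀ (by positivity), ← pow_succ', pow_lt_pow_iff_right₀ one_lt_two] at hub
  rw [div_lt_div_iff₀ two_pos (by positivity), one_mul, ← pow_succ,
    pow_lt_pow_iff_right₀ one_lt_two] at hlb
  omega

theorem IsBlowup.exists_submodule_density_compl_diff_le (h : IsBlowup M U L)
    (hs : s ≤ Module.finrank (ZMod 2) U)
    (hU : DenseSetsHaveFlats U s (η * (η / (4 * Fintype.card A))))
    (hM : ¬ HasBlowup (Module.finrank (ZMod 2) A + 1) s M)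
    (hMc : Fintype.card A * density Mᶜ ≤ 1)
    (hη : 0 < η) (hη' : 16 * (Fintype.card A * 2 ^ s * η) ≤ 1) :
    ∃ F : Submodule (ZMod 2) V,
      Module.finrank (ZMod 2) F + Module.finrank (ZMod 2) A = Module.finrank (ZMod 2) V ∧
        density ((F : Set V)ᶜ \ M) ≤ 3 * η := by
  set q : ℝ := (Fintype.card A : ℝ)
  have hq : 1 ≤ q := Nat.one_le_cast.2 Fintype.card_pos
  have hqη : 16 * (q * η) ≤ 1 := by
    refine hη'.trans' ?_
    gcongr
    exact le_mul_of_one_le_right (by positivity) (one_le_pow₀ one_le_two)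
  have hη1 : 16 * η ≤ 1 := by nlinarith
  set δ : ℝ := η / (4 * q) with hδ
  have hδ0 : 0 < δ := by positivity
  have hδη : δ ≤ η := div_le_self hη.le (by linarith)
  set P := peaked M U L η
  set C := crowded M U L δ
  have hsum := h.one_sub_lt_sum_missDensity hU hM
  have hC : density C ≤ η :=
    le_of_mul_le_mul_right (density_crowded_mul_le hsum hMc (by positivity)) hδ0
  have hPC : 1 ≤ q * density P + density C := one_le_card_mul_density_add fun y =>
    h.exists_add_mem_peaked hU hM (by nlinarith) (by nlinarith) (by rw [hδ]; field_simp; rfl)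
  have hP : q * density P ≤ 1 := card_mul_density_le_one fun x hx w hw hxw => by
    have := hx w hw
    have := le_missDensity_of_mem_peaked hxw hη.le (hsum _)
    nlinarith
  obtain ⟨F, hPF, hFPC⟩ := exists_submodule_between
    (fun x hx y hy => h.add_mem_peaked_union_crowded hU hM hs (by nlinarith) (by nlinarith)
      (by rw [hδ]; field_simp; rfl) hη.le (by linarith) hx hy) (T := P) (B := C) (by nlinarith)
  refine ⟨F, finrank_add_finrank_eq_of_density ?_ ?_, ?_⟩
  · nlinarith [density_mono hPF]
  · nlinarith [(density_mono hFPC).trans (density_union_le P C)]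
  · refine le_of_mul_le_mul_left ?_ (one_pos.trans_le hq)
    have := card_mul_density_compl_diff_le hMc hη.le hsum (by positivity) (by nlinarith)
      (by linarith : 1 - η ≤ q * density P) hη.le hPF
    nlinarith

theorem exists_submodule_density_compl_diff_le.{u} (k s : ℕ) {ε : ℝ} (hε : 0 < ε) :
    ∃ n₀ : ℕ, ∀ (V : Type u) [AddCommGroup V] [Module (ZMod 2) V] [Fintype V],
      n₀ ≤ Module.finrank (ZMod 2) V → ∀ M : Set V, ¬ HasBlowup (k + 1) s M →
        2 ^ k * density Mᶜ ≤ 1 →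
          ∃ F : Submodule (ZMod 2) V,
            Module.finrank (ZMod 2) F + k = Module.finrank (ZMod 2) V ∧
              density ((F : Set V)ᶜ \ M) ≤ ε := by
  set A := Fin k → ZMod 2
  have hA : (Fintype.card A : ℝ) = 2 ^ k := by simp [A]
  have hfA : Module.finrank (ZMod 2) A = k := by simp [A]
  obtain ⟨η, hη, hηε, hηq⟩ : ∃ η : ℝ, 0 < η ∧ 3 * η ≤ ε ∧ 16 * (2 ^ k * 2 ^ s * η) ≤ 1 := by
    refine ⟨min (ε / 3) (1 / (16 * (2 ^ k * 2 ^ s))), by positivity, ?_, ?_⟩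
    · linarith [min_le_left (ε / 3) (1 / (16 * (2 ^ k * 2 ^ s)))]
    · have := min_le_right (ε / 3) (1 / (16 * (2 ^ k * 2 ^ s)))
      rw [le_div_iff₀ (by positivity)] at this
      linarith
  obtain ⟨d, hd⟩ := exists_denseSetsHaveFlats.{u} s (δ := η * (η / (4 * 2 ^ k))) (by positivity)
  obtain ⟨n₀, hn₀⟩ := exists_hasBlowup.{u} k (max d s) (γ := 1) one_pos
  refine ⟨n₀, fun V _ _ _ hV M hM hMc => ?_⟩
  obtain ⟨U, hU, L, hL⟩ := hn₀ V hV M (by linarith)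
  have := IsBlowup.exists_submodule_density_compl_diff_le (A := A) (s := s) hL (by omega)
    (by rw [hA]; exact hd U (by omega)) (by rwa [hfA]) (by rwa [hA]) hη (by rwa [hA])
  rw [hfA] at this
  obtain ⟨F, hF, hFM⟩ := this
  exact ⟨F, hF, hFM.trans hηε⟩

end Stability

section Extension

variable {K W V X : Type*} [Field K] [AddCommGroup W] [Module K W] [AddCommGroup V] [Module K V]
  [AddCommGroup X] [Module K X] {p : Submodule K W} {q : Submodule K V}

lemma exists_extend_mkQ (f : p →ₗ[K] q) (e : (W ⧸ p) →ₗ[K] V ⧸ q) :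
    ∃ g : W →ₗ[K] V, (∀ x : p, g x = f x) ∧ ∀ x, q.mkQ (g x) = e (p.mkQ x) := by
  obtain ⟨f', hf'⟩ := f.exists_extend
  obtain ⟨σ, hσ⟩ := Module.projective_lifting_property q.mkQ e q.mkQ_surjective
  refine ⟨q.subtype ∘ₗ f' + σ ∘ₗ p.mkQ, fun x => ?_, fun x => ?_⟩
  · simpa [(Submodule.Quotient.mk_eq_zero p).2 x.2] using LinearMap.congr_fun hf' x
  · simpa [(Submodule.Quotient.mk_eq_zero q).2 (f' x).2] using LinearMap.congr_fun hσ (p.mkQ x)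

lemma injective_of_extend_mkQ {f : p →ₗ[K] q} (hf : Function.Injective f)
    {e : (W ⧸ p) →ₗ[K] V ⧸ q} (he : Function.Injective e) {g : W →ₗ[K] V}
    (hgf : ∀ x : p, g x = f x) (hge : ∀ x, q.mkQ (g x) = e (p.mkQ x)) : Function.Injective g := by
  refine (injective_iff_map_eq_zero g).2 fun x hx => ?_
  have hxp : x ∈ p := by
    have : e (p.mkQ x) = 0 := by rw [← hge, hx, map_zero]
    simpa using (injective_iff_map_eq_zero e).1 he _ this
  have hfx : f ⟨x, hxp⟩ = 0 := Subtype.ext ((hgf ⟨x, hxp⟩).symm.trans hx)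
  exact congrArg Subtype.val ((injective_iff_map_eq_zero f).1 hf _ hfx)

lemma exists_injective_comp_eq [FiniteDimensional K W] [FiniteDimensional K V]
    {θ : X →ₗ[K] W} (hθ : Function.Injective θ) {ψ : X →ₗ[K] V} (hψ : Function.Injective ψ)
    (h : Module.finrank K W ≤ Module.finrank K V) :
    ∃ g : W →ₗ[K] V, Function.Injective g ∧ g ∘ₗ θ = ψ := by
  let f : θ.range ≃ₗ[K] ψ.range :=
    (LinearEquiv.ofInjective θ hθ).symm.trans (LinearEquiv.ofInjective ψ hψ)
  have hfθ (x : X) : (f ⟨θ x, x, rfl⟩ : V) = ψ x := by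
    have : (LinearEquiv.ofInjective θ hθ).symm ⟨θ x, x, rfl⟩ = x :=
      (LinearEquiv.ofInjective θ hθ).symm_apply_apply x
    simp [f, this]
  have hcodim : Module.finrank K (W ⧸ θ.range) ≤ Module.finrank K (V ⧸ ψ.range) := by
    have h₁ := θ.range.finrank_quotient_add_finrank
    have h₂ := ψ.range.finrank_quotient_add_finrank
    have h₃ := f.finrank_eq
    omega
  obtain ⟨e, he⟩ := finrank_le_iff_exists_linearMap.1 hcodim
  obtain ⟨g, hgf, hge⟩ := exists_extend_mkQ f.toLinearMap e
  exact ⟨g, injective_of_extend_mkQ f.injective he hgf hge,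
    LinearMap.ext fun x => (hgf ⟨θ x, x, rfl⟩).trans (hfθ x)⟩

end Extension

section Embedding

variable {W V : Type*} [AddCommGroup W] [Module (ZMod 2) W]
  [AddCommGroup V] [Module (ZMod 2) V] [Fintype V]

lemma exists_linearMap_forall_apply_notMem [Finite W] {ι : Type*} [Fintype ι] {v : ι → W}
    (hv : ∀ i, v i ≠ 0) {S : ι → Set V} (hS : ∑ i, density (S i) < 1) :
    ∃ R : W →ₗ[ZMod 2] V, ∀ i, R (v i) ∉ S i := by
  have : Finite (W →ₗ[ZMod 2] V) := DFunLike.finite _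
  have := Fintype.ofFinite (W →ₗ[ZMod 2] V)
  have hsurj (i : ι) : Function.Surjective (LinearMap.applyₗ (R := ZMod 2) (M₂ := V) (v i)) := by
    intro y
    obtain ⟨l, hl⟩ := exists_dual_apply_eq_one (hv i)
    exact ⟨l.smulRight y, by simp [hl]⟩
  have hbad : density (⋃ i, (fun R : W →ₗ[ZMod 2] V => R (v i)) ⁻¹' S i) < 1 := by
    refine (density_iUnion_le _).trans_lt (hS.trans_eq' (Finset.sum_congr rfl fun i _ => ?_))
    exact (density_preimage_of_surjective
      (LinearMap.applyₗ (R := ZMod 2) (M₂ := V) (v i)).toAddMonoidHom (hsurj i) (S i)).symm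
  obtain ⟨R, hR⟩ := exists_notMem_of_density_lt_one hbad
  exact ⟨R, by simpa using hR⟩

lemma card_mul_density_preimage_add_le {F : Submodule (ZMod 2) V} {M : Set V} {v : V}
    (hv : v ∉ F) : Fintype.card F * density {u : F | v + u ∉ M} ≤ ((F : Set V)ᶜ \ M).ncard := by
  rw [card_mul_density, Nat.cast_le]
  refine Set.ncard_le_ncard_of_injOn (fun u : F => v + u) (fun u hu => ⟨fun h => hv ?_, hu⟩)
    fun _ _ _ _ h => Subtype.ext (add_left_cancel h)
  exact (F.add_mem_iff_left u.2).1 h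

lemma exists_injective_extend_forall_notMem_apply_mem [Fintype W] {F' : Submodule (ZMod 2) W}
    {F : Submodule (ZMod 2) V} {f : F' →ₗ[ZMod 2] F} (hf : Function.Injective f)
    (hcodim : Module.finrank (ZMod 2) (W ⧸ F') ≤ Module.finrank (ZMod 2) (V ⧸ F))
    {M : Set V} (hM : Fintype.card W * ((F : Set V)ᶜ \ M).ncard < Fintype.card F) :
    ∃ g : W →ₗ[ZMod 2] V, Function.Injective g ∧ (∀ x : F', g x = f x) ∧ ∀ x ∉ F', g x ∈ M := by
  have : Fintype (W ⧸ F') := Fintype.ofSurjective _ F'.mkQ_surjective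
  obtain ⟨e, he⟩ := finrank_le_iff_exists_linearMap.1 hcodim
  obtain ⟨g, hgf, hge⟩ := exists_extend_mkQ f e
  have hgF (x : {x // x ∉ F'}) : g x ∉ F := fun h => x.2 <| by
    have : e (F'.mkQ x) = 0 := by rw [← hge]; simpa using h
    simpa using (injective_iff_map_eq_zero e).1 he _ this
  obtain ⟨R, hR⟩ := exists_linearMap_forall_apply_notMem (W := W ⧸ F') (V := F)
    (v := fun x : {x // x ∉ F'} => F'.mkQ x) (S := fun x => {u | g x + u ∉ M})
    (fun x hx => x.2 (by simpa using hx)) (by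
      have hF : (0 : ℝ) < Fintype.card F := mod_cast Fintype.card_pos
      refine lt_of_mul_lt_mul_left ?_ hF.le
      calc Fintype.card F * ∑ x : {x // x ∉ F'}, density {u : F | g x + u ∉ M}
          ≤ ∑ _x : {x // x ∉ F'}, (((F : Set V)ᶜ \ M).ncard : ℝ) := by
            rw [Finset.mul_sum]
            exact Finset.sum_le_sum fun x _ => card_mul_density_preimage_add_le (hgF x)
        _ ≤ Fintype.card W * ((F : Set V)ᶜ \ M).ncard := by
            rw [Finset.sum_const, nsmul_eq_mul]
            gcongr
            exact Fintype.card_subtype_le _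
        _ < Fintype.card F * 1 := by rw [mul_one]; exact_mod_cast hM)
  refine ⟨g + F.subtype ∘ₗ R ∘ₗ F'.mkQ, injective_of_extend_mkQ hf he ?_ ?_, ?_, fun x hx => ?_⟩
  · intro x
    simp [hgf, (Submodule.Quotient.mk_eq_zero F').2 x.2]
  · intro x
    simpa [(Submodule.Quotient.mk_eq_zero F).2 (R _).2] using hge x
  · intro x
    simp [hgf, (Submodule.Quotient.mk_eq_zero F').2 x.2]
  · simpa using hR ⟨x, hx⟩

end Embedding

section Restrictions

variable {A B C : Type*} [AddCommGroup A] [Module (ZMod 2) A] [AddCommGroup B] [Module (ZMod 2) B]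
  [AddCommGroup C] [Module (ZMod 2) C] {D : Set A} {M : Set B} {P : Set C}

lemma hasRestriction_preimage {f : A →ₗ[ZMod 2] B} (hf : Function.Injective f) (M : Set B) :
    HasRestriction (f ⁻¹' M) M :=
  ⟨f, hf, Set.image_preimage_subset f M⟩

namespace HasRestriction

lemma trans (h₁ : HasRestriction D M) (h₂ : HasRestriction M P) : HasRestriction D P := by
  obtain ⟨f, hf, hDM⟩ := h₁
  obtain ⟨g, hg, hMP⟩ := h₂
  refine ⟨g ∘ₗ f, hg.comp hf, ?_⟩
  rw [LinearMap.coe_comp, Set.image_comp]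
  exact (Set.image_mono hDM).trans hMP

lemma finrank_le [Module.Finite (ZMod 2) B] (h : HasRestriction D M) :
    Module.finrank (ZMod 2) A ≤ Module.finrank (ZMod 2) B := by
  obtain ⟨f, hf, -⟩ := h
  exact LinearMap.finrank_le_finrank_of_injective hf

lemma ncard_le [Finite B] (h : HasRestriction D M) : D.ncard ≤ M.ncard := by
  obtain ⟨f, hf, hDM⟩ := h
  rw [← Set.ncard_image_of_injective D hf]
  exact Set.ncard_le_ncard hDM

lemma symm_of_le [Finite A] [Finite B] (h : HasRestriction D M)
    (hrank : Module.finrank (ZMod 2) B ≤ Module.finrank (ZMod 2) A) (hcard : M.ncard ≤ D.ncard) :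
    HasRestriction M D := by
  have hAB := h.finrank_le
  obtain ⟨f, hf, hDM⟩ := h
  have hM : f '' D = M :=
    Set.eq_of_subset_of_ncard_le hDM (by rwa [Set.ncard_image_of_injective D hf])
  let e := LinearEquiv.ofInjectiveOfFinrankEq f hf (hAB.antisymm hrank)
  have he (x : A) : e.symm (f x) = x := e.symm_apply_apply x
  refine ⟨e.symm, e.symm.injective, ?_⟩
  rw [← hM, ← Set.image_comp]
  simp [he]

lemma of_image {f : B →ₗ[ZMod 2] C} (hf : Function.Injective f)
    (hD : Submodule.span (ZMod 2) D = ⊤) (h : HasRestriction D (f '' M)) : HasRestriction D M := by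
  obtain ⟨g, hg, hDM⟩ := h
  obtain ⟨r, hr⟩ := f.exists_leftInverse_of_injective (LinearMap.ker_eq_bot.2 hf)
  have hr (x : B) : r (f x) = x := LinearMap.congr_fun hr x
  have hfr : f ∘ₗ r ∘ₗ g = g := LinearMap.ext_on hD fun x hx => by
    obtain ⟨y, -, hy⟩ := hDM ⟨x, hx, rfl⟩
    simp [← hy, hr]
  refine ⟨r ∘ₗ g, Function.Injective.of_comp (f := f) ?_, ?_⟩
  · rw [← LinearMap.coe_comp, hfr]
    exact hg
  · rintro _ ⟨x, hx, rfl⟩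
    obtain ⟨y, hyM, hy⟩ := hDM ⟨x, hx, rfl⟩
    simpa [← hy, hr] using hyM

end HasRestriction

lemma hasRestriction_of_linearIndependent [Finite A] [Finite B]
    (hD : LinearIndependent (ZMod 2) ((↑) : D → A)) (hspan : Submodule.span (ZMod 2) D = ⊤)
    (hrank : Module.finrank (ZMod 2) A ≤ Module.finrank (ZMod 2) (Submodule.span (ZMod 2) M)) :
    HasRestriction D M := by
  obtain ⟨b, hbM, hb, hbind⟩ := exists_linearIndependent (ZMod 2) M
  let v : Module.Basis D (ZMod 2) A := .mk hD (by simp [hspan])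
  have := Fintype.ofFinite D
  have := Fintype.ofFinite b
  have hcard : Fintype.card D ≤ Fintype.card b := by
    rw [← hb, Module.finrank_eq_card_basis v] at hrank
    exact hrank.trans ((finrank_span_le_card b).trans_eq b.toFinset_card)
  obtain ⟨e⟩ := Function.Embedding.nonempty_of_card_le hcard
  refine ⟨v.constr ℕ fun i => (e i : B),
    v.injective_constr_of_linearIndependent (hbind.comp e e.injective), ?_⟩
  rintro _ ⟨x, hx, rfl⟩
  have hvx : v ⟨x, hx⟩ = x := by simp [v]
  rw [← hvx, v.constr_basis]
  exact hbM (e _).2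

end Restrictions

section CriticalNumber

variable {n k : ℕ}

lemma exists_le_comap_finrank_add_eq {W V : Type*} [AddCommGroup W] [Module (ZMod 2) W] [Finite W]
    [AddCommGroup V] [Module (ZMod 2) V] [Finite V] (f : W →ₗ[ZMod 2] V)
    {F : Submodule (ZMod 2) V}
    (hF : Module.finrank (ZMod 2) V ≤ Module.finrank (ZMod 2) F + k)
    (hk : k ≤ Module.finrank (ZMod 2) W) :
    ∃ F' ≤ F.comap f, Module.finrank (ZMod 2) F' + k = Module.finrank (ZMod 2) W := by
  have hker : (F.mkQ ∘ₗ f).ker = F.comap f := by rw [LinearMap.ker_comp, F.ker_mkQ]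
  have h₁ := (F.mkQ ∘ₗ f).finrank_range_add_finrank_ker
  have h₂ := (F.mkQ ∘ₗ f).range.finrank_le
  have h₃ := F.finrank_quotient_add_finrank
  rw [hker] at h₁
  obtain ⟨F', hF', hrank⟩ := exists_submodule_le_finrank_eq (F.comap f)
    (s := Module.finrank (ZMod 2) W - k) (by omega)
  exact ⟨F', hF', by omega⟩

lemma critNum_le_iff_exists_linearMap {M : Set (Fin n → ZMod 2)} (hM : 0 ∉ M) :
    critNum M ≤ k ↔ ∃ φ : (Fin n → ZMod 2) →ₗ[ZMod 2] Fin k → ZMod 2, ∀ x ∈ M, φ x ≠ 0 := by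
  refine ⟨fun h => ?_, fun h => Nat.sInf_le h⟩
  obtain ⟨φ, hφ⟩ : ∃ φ : (Fin n → ZMod 2) →ₗ[ZMod 2] Fin (critNum M) → ZMod 2, ∀ x ∈ M, φ x ≠ 0 :=
    Nat.sInf_mem
      (s := {c | ∃ φ : (Fin n → ZMod 2) →ₗ[ZMod 2] Fin c → ZMod 2, ∀ x ∈ M, φ x ≠ 0})
      ⟨n, LinearMap.id, fun x hx => ne_of_mem_of_not_mem hx hM⟩
  obtain ⟨ι, hι⟩ := finrank_le_iff_exists_linearMap (R := ZMod 2) (M := Fin (critNum M) → ZMod 2)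
    (M' := Fin k → ZMod 2) |>.1 (by simpa using h)
  exact ⟨ι ∘ₗ φ, fun x hx h0 => hφ x hx (hι (by simpa using h0))⟩

lemma critNum_le_iff_exists_submodule {M : Set (Fin n → ZMod 2)} (hM : 0 ∉ M) (hk : k ≤ n) :
    critNum M ≤ k ↔ ∃ F : Submodule (ZMod 2) (Fin n → ZMod 2),
      Module.finrank (ZMod 2) F + k = n ∧ Disjoint M F := by
  rw [critNum_le_iff_exists_linearMap hM]
  constructor
  · rintro ⟨φ, hφ⟩
    obtain ⟨F, hFφ, hF⟩ := exists_le_comap_finrank_add_eq φ (F := ⊥) (k := k) (by simp) (by simpa)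
    exact ⟨F, by simpa using hF, Set.disjoint_left.2 fun x hx hxF => hφ x hx (hFφ hxF)⟩
  · rintro ⟨F, hF, hMF⟩
    have hcodim : Module.finrank (ZMod 2) ((Fin n → ZMod 2) ⧸ F) = k := by
      have := F.finrank_quotient_add_finrank
      simp only [Module.finrank_fin_fun] at this
      omega
    let e : ((Fin n → ZMod 2) ⧸ F) ≃ₗ[ZMod 2] Fin k → ZMod 2 :=
      LinearEquiv.ofFinrankEq _ _ (by simpa using hcodim)
    exact ⟨e ∘ₗ F.mkQ, fun x hx h => Set.disjoint_left.1 hMF hx (by simpa using h)⟩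

lemma critNum_le_dim {M : Set (Fin n → ZMod 2)} (hM : 0 ∉ M) : critNum M ≤ n :=
  (critNum_le_iff_exists_linearMap hM).2
    ⟨LinearMap.id, fun _ hx => ne_of_mem_of_not_mem hx hM⟩

lemma HasBlowup.hasRestriction {V : Type*} [AddCommGroup V] [Module (ZMod 2) V] [Finite V]
    {M : Set V} {N : Set (Fin n → ZMod 2)} (h : HasBlowup k n M) (hM : 0 ∉ M) (hN : 0 ∉ N)
    (hk : critNum N ≤ k) : HasRestriction N M := by
  obtain ⟨U, hU, L, hL⟩ := h
  obtain ⟨φ, hφ⟩ := (critNum_le_iff_exists_linearMap hN).1 hk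
  let e : (Fin n → ZMod 2) ≃ₗ[ZMod 2] U := LinearEquiv.ofFinrankEq _ _ (by simp [hU])
  have hmem (x : Fin n → ZMod 2) (hx : φ x ≠ 0) : L (φ x) + e x ∈ M := hL _ hx _ (e x).2
  refine ⟨L ∘ₗ φ + U.subtype ∘ₗ e, (injective_iff_map_eq_zero _).2 fun x hx => ?_, ?_⟩
  · have hφx : φ x = 0 := by
      by_contra h
      exact hM (hx ▸ hmem x h)
    simpa [hφx] using hx
  · rintro _ ⟨x, hx, rfl⟩
    exact hmem x (hφ x hx)

end CriticalNumber

section Sections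

variable {W X Y : Type*} [AddCommGroup W] [Module (ZMod 2) W] [AddCommGroup X] [Module (ZMod 2) X]
  [AddCommGroup Y] [Module (ZMod 2) Y] {N : Set W} {D : Set X} {k : ℕ}

/-- The section of `N` by some subspace `F` of codimension `k` lies in a copy of `D` inside `F`.
When `N` has dimension `n ≥ k` this says that `D^{n,k}` has an `N`-restriction. -/
def HasSectionIn (N : Set W) (k : ℕ) (D : Set X) : Prop :=
  ∃ F : Submodule (ZMod 2) W, Module.finrank (ZMod 2) F + k = Module.finrank (ZMod 2) W ∧
    ∃ θ : X →ₗ[ZMod 2] F, Function.Injective θ ∧ F.subtype ⁻¹' N ⊆ θ '' D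

lemma HasSectionIn.preimage (h : HasSectionIn N k D) {f : Y →ₗ[ZMod 2] X}
    (hf : Function.Injective f) (hD : D ⊆ Set.range f) : HasSectionIn N k (f ⁻¹' D) := by
  obtain ⟨F, hF, θ, hθ, hN⟩ := h
  refine ⟨F, hF, θ ∘ₗ f, hθ.comp hf, ?_⟩
  rwa [LinearMap.coe_comp, Set.image_comp, Set.image_preimage_eq_of_subset hD]

lemma HasSectionIn.hasRestriction [Fintype W] {V : Type*} [AddCommGroup V] [Module (ZMod 2) V]
    [Fintype V] (h : HasSectionIn N k D)
    (hWV : Module.finrank (ZMod 2) W ≤ Module.finrank (ZMod 2) V)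
    {F : Submodule (ZMod 2) V} (hF : Module.finrank (ZMod 2) F + k = Module.finrank (ZMod 2) V)
    {M : Set V} (hM : Fintype.card W * ((F : Set V)ᶜ \ M).ncard < Fintype.card F)
    (hD : HasRestriction D (F.subtype ⁻¹' M)) : HasRestriction N M := by
  obtain ⟨F', hF', θ, hθ, hN⟩ := h
  obtain ⟨ψ, hψ, hDM⟩ := hD
  obtain ⟨f, hf, hfθ⟩ := exists_injective_comp_eq hθ hψ (by omega)
  have hcodim : Module.finrank (ZMod 2) (W ⧸ F') ≤ Module.finrank (ZMod 2) (V ⧸ F) := by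
    have h₁ := F'.finrank_quotient_add_finrank
    have h₂ := F.finrank_quotient_add_finrank
    omega
  obtain ⟨g, hg, hgf, hgM⟩ := exists_injective_extend_forall_notMem_apply_mem hf hcodim hM
  refine ⟨g, hg, ?_⟩
  rintro _ ⟨x, hx, rfl⟩
  by_cases hxF : x ∈ F'
  · obtain ⟨d, hd, hdx⟩ := hN (show (⟨x, hxF⟩ : F') ∈ F'.subtype ⁻¹' N from hx)
    rw [hgf ⟨x, hxF⟩, ← hdx, ← LinearMap.comp_apply, hfθ]
    exact hDM ⟨d, hd, rfl⟩
  · exact hgM x hxF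

lemma exists_isCopyNnt_hasRestriction_iff {n d : ℕ} (hk : k ≤ n) {N : Set (Fin n → ZMod 2)}
    {D : Set (Fin d → ZMod 2)} :
    (∃ M, IsCopyNnt D n k M ∧ HasRestriction N M) ↔ HasSectionIn N k D := by
  constructor
  · rintro ⟨_, ⟨F, hF, θ, hθ, hθF, rfl⟩, ρ, hρ, hN⟩
    let e := LinearEquiv.ofInjectiveEndo ρ hρ
    have he (x : Fin n → ZMod 2) : ρ (e.symm x) = x := e.apply_symm_apply x
    refine ⟨F.map (e.symm : (Fin n → ZMod 2) →ₗ[ZMod 2] Fin n → ZMod 2), ?_,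
      (e.symm.submoduleMap F).toLinearMap ∘ₗ θ.codRestrict F hθF, ?_, ?_⟩
    · rw [LinearEquiv.finrank_map_eq, hF]
      simpa using Nat.sub_add_cancel hk
    · exact (e.symm.submoduleMap F).injective.comp ((LinearMap.injective_codRestrict_iff _).2 hθ)
    · rintro ⟨_, x, hx, rfl⟩ hxN
      obtain ⟨d, hd, hdx⟩ | h := he x ▸ hN ⟨e.symm x, hxN, rfl⟩
      · exact ⟨d, hd, Subtype.ext (congrArg e.symm hdx)⟩
      · exact absurd hx h
  · rintro ⟨F, hF, θ, hθ, hN⟩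
    rw [Module.finrank_fin_fun] at hF
    refine ⟨_, ⟨F, by omega, F.subtype ∘ₗ θ, F.subtype_injective.comp hθ, fun x => (θ x).2, rfl⟩,
      LinearMap.id, Function.injective_id, ?_⟩
    rintro _ ⟨x, hx, rfl⟩
    by_cases hxF : x ∈ F
    · obtain ⟨d, hd, hdx⟩ := hN (show (⟨x, hxF⟩ : F) ∈ F.subtype ⁻¹' N from hx)
      exact Or.inl ⟨d, hd, congrArg Subtype.val hdx⟩
    · exact Or.inr hxF

end Sections

section DecompositionFamily

variable {𝒩 : Set (Σ k : ℕ, Set (Fin k → ZMod 2))} {k : ℕ} {N D : Σ k : ℕ, Set (Fin k → ZMod 2)}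

/-- The property of which the members of the decomposition family are the minimal instances. -/
def IsDecomposing (𝒩 : Set (Σ k : ℕ, Set (Fin k → ZMod 2))) (k : ℕ)
    (D : Σ k : ℕ, Set (Fin k → ZMod 2)) : Prop :=
  0 ∉ D.2 ∧ ∃ N ∈ 𝒩, HasSectionIn N.2 k D.2

lemma mem_decompFam_iff (h𝒩 : ∀ N ∈ 𝒩, k ≤ N.1) :
    D ∈ decompFam 𝒩 k ↔ IsDecomposing 𝒩 k D ∧
      ∀ D', IsDecomposing 𝒩 k D' → HasRestriction D'.2 D.2 → HasRestriction D.2 D'.2 := by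
  have hiff (D' : Σ k : ℕ, Set (Fin k → ZMod 2)) :
      (∃ N ∈ 𝒩, ∃ M : Set (Fin N.1 → ZMod 2), IsCopyNnt D'.2 N.1 k M ∧ HasRestriction N.2 M) ↔
        ∃ N ∈ 𝒩, HasSectionIn N.2 k D'.2 :=
    exists_congr fun N => and_congr_right fun hN => exists_isCopyNnt_hasRestriction_iff (h𝒩 N hN)
  simp only [decompFam, IsDecomposing, Set.mem_ofPred_eq, hiff, and_imp, and_assoc]

lemma IsDecomposing.exists_mem_decompFam_hasRestriction (h𝒩 : ∀ N ∈ 𝒩, k ≤ N.1)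
    (hD : IsDecomposing 𝒩 k D) : ∃ D' ∈ decompFam 𝒩 k, HasRestriction D'.2 D.2 := by
  have hD₀ : D ∈ {D' | IsDecomposing 𝒩 k D' ∧ HasRestriction D'.2 D.2} :=
    ⟨hD, hasRestriction_preimage (f := LinearMap.id) Function.injective_id D.2⟩
  obtain ⟨D', ⟨hD', hres⟩, hmin⟩ := exists_minimalFor_of_wellFoundedLT _
    (fun D' : Σ k : ℕ, Set (Fin k → ZMod 2) => D'.1 + D'.2.ncard) ⟨D, hD₀⟩
  refine ⟨D', (mem_decompFam_iff h𝒩).2 ⟨hD', fun D'' hD'' h => ?_⟩, hres⟩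
  have hdim : D''.1 ≤ D'.1 := by simpa using h.finrank_le
  have hcard := h.ncard_le
  have hle : D'.1 + D'.2.ncard ≤ D''.1 + D''.2.ncard :=
    hmin ⟨hD'', h.trans hres⟩ (Nat.add_le_add hdim hcard)
  exact h.symm_of_le (by simpa using (by omega : D'.1 ≤ D''.1)) (by omega)

lemma span_eq_top_of_mem_decompFam (h𝒩 : ∀ N ∈ 𝒩, k ≤ N.1) (hD : D ∈ decompFam 𝒩 k) :
    Submodule.span (ZMod 2) D.2 = ⊤ := by
  obtain ⟨⟨hD0, N, hN, hND⟩, hmin⟩ := (mem_decompFam_iff h𝒩).1 hD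
  let U := Submodule.span (ZMod 2) D.2
  let e : (Fin (Module.finrank (ZMod 2) U) → ZMod 2) ≃ₗ[ZMod 2] U :=
    LinearEquiv.ofFinrankEq _ _ (by simp)
  let f := U.subtype ∘ₗ e.toLinearMap
  have hf : Function.Injective f := U.subtype_injective.comp e.injective
  have hDf : D.2 ⊆ Set.range f := fun x hx =>
    ⟨e.symm ⟨x, Submodule.subset_span hx⟩, by simp [f]⟩
  have hle := (hmin ⟨_, f ⁻¹' D.2⟩ ⟨by simpa, N, hN, hND.preimage hf hDf⟩
    (hasRestriction_preimage hf D.2)).finrank_le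
  exact Submodule.eq_top_of_finrank_eq (le_antisymm U.finrank_le (by simpa using hle))

lemma exists_mem_decompFam_hasRestriction_preimage (h𝒩 : ∀ N ∈ 𝒩, k ≤ N.1) (hN : N ∈ 𝒩)
    (hN0 : 0 ∉ N.2) {F : Submodule (ZMod 2) (Fin N.1 → ZMod 2)}
    (hF : Module.finrank (ZMod 2) F + k = N.1) :
    ∃ D ∈ decompFam 𝒩 k, HasRestriction D.2 (F.subtype ⁻¹' N.2) := by
  let e : (Fin (Module.finrank (ZMod 2) F) → ZMod 2) ≃ₗ[ZMod 2] F :=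
    LinearEquiv.ofFinrankEq _ _ (by simp)
  let D : Σ k : ℕ, Set (Fin k → ZMod 2) := ⟨_, e ⁻¹' (F.subtype ⁻¹' N.2)⟩
  have hD : IsDecomposing 𝒩 k D := by
    refine ⟨by simpa [D], N, hN, F, by simpa using hF, e, e.injective, ?_⟩
    exact (Set.image_preimage_eq _ e.surjective).ge
  obtain ⟨D', hD', hres⟩ := hD.exists_mem_decompFam_hasRestriction h𝒩
  exact ⟨D', hD', hres.trans (hasRestriction_preimage (f := e.toLinearMap) e.injective _)⟩

lemma exists_mem_decompFam_linearIndependent (h𝒩 : ∀ N ∈ 𝒩, k ≤ N.1) (hN : N ∈ 𝒩)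
    (hN0 : 0 ∉ N.2) {I : Set (Fin N.1 → ZMod 2)}
    (hI : LinearIndependent (ZMod 2) ((↑) : I → Fin N.1 → ZMod 2)) (hNI : critNum (N.2 \ I) ≤ k) :
    ∃ D ∈ decompFam 𝒩 k, D.1 ≤ I.ncard ∧
      LinearIndependent (ZMod 2) ((↑) : D.2 → Fin D.1 → ZMod 2) := by
  obtain ⟨F, hF, hdisj⟩ := (critNum_le_iff_exists_submodule (fun h => hN0 h.1) (h𝒩 N hN)).1 hNI
  obtain ⟨D, hD, ψ, hψ, hDN⟩ := exists_mem_decompFam_hasRestriction_preimage h𝒩 hN hN0 hF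
  have hDI (x : D.2) : (ψ x : Fin N.1 → ZMod 2) ∈ I := by
    by_contra h
    exact Set.disjoint_left.1 hdisj ⟨hDN ⟨x, x.2, rfl⟩, h⟩ (ψ x).2
  have hinj : Function.Injective fun x : D.2 => (⟨ψ x, hDI x⟩ : I) := fun x y hxy =>
    Subtype.ext (hψ (Subtype.ext (Subtype.mk.inj hxy)))
  refine ⟨D, hD, ?_, (hI.comp _ hinj).of_comp (F.subtype ∘ₗ ψ)⟩
  have := Fintype.ofFinite D.2
  calc D.1 = Module.finrank (ZMod 2) (Submodule.span (ZMod 2) D.2) := by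
        rw [span_eq_top_of_mem_decompFam h𝒩 hD, finrank_top, Module.finrank_fin_fun]
    _ ≤ D.2.ncard := by
        rw [Set.ncard_eq_toFinset_card']
        exact finrank_span_le_card D.2
    _ ≤ I.ncard := Nat.card_le_card_of_injective _ hinj

end DecompositionFamily

section TuranNumber

variable {𝒩 𝒟 : Set (Σ k : ℕ, Set (Fin k → ZMod 2))} {n s : ℕ}

lemma ncard_le_exNumFam {M : Set (Fin n → ZMod 2)} (hM : 0 ∉ M)
    (hfree : ∀ N ∈ 𝒩, ¬ HasRestriction N.2 M) : M.ncard ≤ exNumFam 𝒩 n := by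
  refine le_csSup ⟨Nat.card (Fin n → ZMod 2), ?_⟩ ⟨M, hM, hfree, rfl⟩
  rintro _ ⟨M', -, -, rfl⟩
  exact Set.ncard_le_card M'

lemma exNumFam_le {m : ℕ} (h : ∀ M : Set (Fin n → ZMod 2), 0 ∉ M →
    (∀ N ∈ 𝒩, ¬ HasRestriction N.2 M) → M.ncard ≤ m) : exNumFam 𝒩 n ≤ m := by
  refine csSup_le' ?_
  rintro _ ⟨M, hM, hfree, rfl⟩
  exact h M hM hfree

lemma exists_ncard_eq_exNumFam (h𝒩 : ∀ N ∈ 𝒩, N.2.Nonempty) (n : ℕ) :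
    ∃ M : Set (Fin n → ZMod 2), 0 ∉ M ∧ (∀ N ∈ 𝒩, ¬ HasRestriction N.2 M) ∧
      M.ncard = exNumFam 𝒩 n := by
  refine Nat.sSup_mem (s := {m | ∃ M : Set (Fin n → ZMod 2), 0 ∉ M ∧
    (∀ N ∈ 𝒩, ¬ HasRestriction N.2 M) ∧ M.ncard = m})
    ⟨_, ∅, Set.notMem_empty 0, ?_, rfl⟩ ⟨Nat.card (Fin n → ZMod 2), ?_⟩
  · rintro N hN ⟨ψ, -, hψ⟩
    exact (h𝒩 N hN).image ψ |>.not_subset_empty hψ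
  · rintro _ ⟨M, -, -, rfl⟩
    exact Set.ncard_le_card M

lemma ncard_le_exNumFam_of_linearIndependent {V : Type*} [AddCommGroup V] [Module (ZMod 2) V]
    [Finite V] (h𝒟 : ∀ D ∈ 𝒟, Submodule.span (ZMod 2) D.2 = ⊤) {D₀ : Σ k : ℕ, Set (Fin k → ZMod 2)}
    (hD₀ : D₀ ∈ 𝒟) (hs : D₀.1 ≤ s + 1)
    (hind : LinearIndependent (ZMod 2) ((↑) : D₀.2 → Fin D₀.1 → ZMod 2)) {P : Set V} (hP : 0 ∉ P)
    (hfree : ∀ D ∈ 𝒟, D.1 ≤ s + 1 → ¬ HasRestriction D.2 P) : P.ncard ≤ exNumFam 𝒟 s := by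
  let U := Submodule.span (ZMod 2) P
  have hU : Module.finrank (ZMod 2) U ≤ s := by
    by_contra! h
    exact hfree D₀ hD₀ hs
      (hasRestriction_of_linearIndependent hind (h𝒟 D₀ hD₀) (by simpa using hs.trans h))
  obtain ⟨f, hf⟩ : ∃ f : U →ₗ[ZMod 2] Fin s → ZMod 2, Function.Injective f :=
    finrank_le_iff_exists_linearMap.1 (by simpa using hU)
  have hPU : U.subtype '' (U.subtype ⁻¹' P) = P :=
    Set.image_preimage_eq_of_subset (by
      rw [Submodule.coe_subtype, Subtype.range_coe]
      exact Submodule.subset_span)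
  calc P.ncard = (f '' (U.subtype ⁻¹' P)).ncard := by
        rw [Set.ncard_image_of_injective _ hf,
          ← Set.ncard_image_of_injective _ U.subtype_injective, hPU]
    _ ≤ exNumFam 𝒟 s := ncard_le_exNumFam ?_ fun D hD h => ?_
  · rintro ⟨x, hx, hfx⟩
    obtain rfl : x = 0 := hf (hfx.trans (map_zero f).symm)
    exact hP hx
  · have hDs : D.1 ≤ s := by simpa using h.finrank_le
    exact hfree D hD (hDs.trans s.le_succ)
      ((h.of_image hf (h𝒟 D hD)).trans (hasRestriction_preimage U.subtype_injective P))

end TuranNumber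

section Bounds

variable {𝒩 : Set (Σ k : ℕ, Set (Fin k → ZMod 2))} {k n s : ℕ}

lemma ncard_compl_submodule {V : Type*} [AddCommGroup V] [Module (ZMod 2) V] [Finite V]
    (F : Submodule (ZMod 2) V) : ((F : Set V)ᶜ).ncard =
      2 ^ Module.finrank (ZMod 2) V - 2 ^ Module.finrank (ZMod 2) F := by
  have := Fintype.ofFinite V
  rw [Set.ncard_compl, ncard_submodule, Nat.card_eq_fintype_card, card_eq_two_pow_finrank]

lemma nonempty_of_mem_decompFam (h𝒩 : ∀ N ∈ 𝒩, 0 ∉ N.2) (hk : ∀ N ∈ 𝒩, k + 1 ≤ critNum N.2)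
    (hdim : ∀ N ∈ 𝒩, k ≤ N.1) {D : Σ k : ℕ, Set (Fin k → ZMod 2)} (hD : D ∈ decompFam 𝒩 k) :
    D.2.Nonempty := by
  obtain ⟨-, N, hN, F, hF, θ, -, hNF⟩ := ((mem_decompFam_iff hdim).1 hD).1
  by_contra! h
  rw [h, Set.image_empty, Set.subset_empty_iff] at hNF
  refine (hk N hN).not_gt (Nat.lt_succ_of_le ?_)
  refine (critNum_le_iff_exists_submodule (h𝒩 N hN) (hdim N hN)).2 ⟨F, by simpa using hF, ?_⟩
  exact Set.disjoint_left.2 fun x hx hxF =>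
    hNF.le (show (⟨x, hxF⟩ : F) ∈ F.subtype ⁻¹' N.2 from hx)

lemma not_hasRestriction_image_union_compl (hdim : ∀ N ∈ 𝒩, k ≤ N.1)
    {M : Set (Fin s → ZMod 2)} (hM : ∀ D ∈ decompFam 𝒩 k, ¬ HasRestriction D.2 M)
    {J : (Fin s → ZMod 2) →ₗ[ZMod 2] Fin n → ZMod 2} (hJ : Function.Injective J)
    {F : Submodule (ZMod 2) (Fin n → ZMod 2)} (hF : Module.finrank (ZMod 2) F + k = n)
    {N : Σ k : ℕ, Set (Fin k → ZMod 2)} (hN : N ∈ 𝒩) (hN0 : 0 ∉ N.2) :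
    ¬ HasRestriction N.2 (J '' M ∪ (F : Set (Fin n → ZMod 2))ᶜ) := by
  rintro ⟨ρ, hρ, hρN⟩
  obtain ⟨F', hF', hF'k⟩ := exists_le_comap_finrank_add_eq (k := k) ρ (F := F) (by simp [hF])
    (by simpa using hdim N hN)
  obtain ⟨D, hD, ψ, hψ, hDN⟩ :=
    exists_mem_decompFam_hasRestriction_preimage hdim hN hN0 (by simpa using hF'k)
  have hDJ : HasRestriction D.2 (J '' M) := by
    refine ⟨ρ ∘ₗ F'.subtype ∘ₗ ψ, hρ.comp (F'.subtype_injective.comp hψ), ?_⟩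
    rintro _ ⟨x, hx, rfl⟩
    exact (hρN ⟨_, hDN ⟨x, hx, rfl⟩, rfl⟩).resolve_right fun h => h (hF' (ψ x).2)
  exact hM D hD (hDJ.of_image hJ (span_eq_top_of_mem_decompFam hdim hD))

theorem add_exNumFam_decompFam_le (h𝒩 : ∀ N ∈ 𝒩, 0 ∉ N.2) (hk : ∀ N ∈ 𝒩, k + 1 ≤ critNum N.2)
    (hdim : ∀ N ∈ 𝒩, k ≤ N.1) (hn : s + k ≤ n) :
    2 ^ n - 2 ^ (n - k) + exNumFam (decompFam 𝒩 k) s ≤ exNumFam 𝒩 n := by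
  obtain ⟨M, hM0, hMfree, hMcard⟩ :=
    exists_ncard_eq_exNumFam (fun D hD => nonempty_of_mem_decompFam h𝒩 hk hdim hD) s
  obtain ⟨F, -, hF⟩ := exists_submodule_le_finrank_eq (⊤ : Submodule (ZMod 2) (Fin n → ZMod 2))
    (s := n - k) (by simp)
  obtain ⟨j, hj⟩ : ∃ j : (Fin s → ZMod 2) →ₗ[ZMod 2] F, Function.Injective j :=
    finrank_le_iff_exists_linearMap.1 (by simp [hF]; omega)
  have hJ : Function.Injective (F.subtype ∘ₗ j) := F.subtype_injective.comp hj
  have hdisj : Disjoint ((F.subtype ∘ₗ j) '' M) (F : Set (Fin n → ZMod 2))ᶜ :=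
    Set.disjoint_left.2 (Set.forall_mem_image.2 fun x _ h => h (j x).2)
  have hcard : ((F.subtype ∘ₗ j) '' M ∪ (F : Set (Fin n → ZMod 2))ᶜ).ncard =
      2 ^ n - 2 ^ (n - k) + exNumFam (decompFam 𝒩 k) s := by
    rw [Set.ncard_union_eq hdisj, Set.ncard_image_of_injective _ hJ, ncard_compl_submodule, hF,
      Module.finrank_fin_fun, hMcard, add_comm]
  rw [← hcard]
  refine ncard_le_exNumFam ?_ fun N hN =>
    not_hasRestriction_image_union_compl hdim hMfree hJ (by omega) hN (h𝒩 N hN)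
  rintro (⟨x, hx, hx0⟩ | h)
  · exact hM0 ((hJ (hx0.trans (map_zero _).symm)) ▸ hx)
  · exact h F.zero_mem

lemma exists_forall_mem_decompFam_hasSectionIn (hdim : ∀ N ∈ 𝒩, k ≤ N.1) (t : ℕ) :
    ∃ d, ∀ D ∈ decompFam 𝒩 k, D.1 ≤ t → ∃ N ∈ 𝒩, N.1 ≤ d ∧ HasSectionIn N.2 k D.2 := by
  have hfin : {D ∈ decompFam 𝒩 k | D.1 ≤ t}.Finite :=
    ((Set.finite_Iic t).biUnion fun i _ =>
      Set.finite_range (Sigma.mk (β := fun k => Set (Fin k → ZMod 2)) i)).subset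
        fun D hD => Set.mem_biUnion hD.2 ⟨D.2, rfl⟩
  choose! N hN hND using fun D (hD : D ∈ {D ∈ decompFam 𝒩 k | D.1 ≤ t}) =>
    ((mem_decompFam_iff hdim).1 hD.1).1.2
  obtain ⟨d, hd⟩ := (hfin.image fun D => (N D).1).bddAbove
  exact ⟨d, fun D hD hDt => ⟨N D, hN D ⟨hD, hDt⟩, hd ⟨D, ⟨hD, hDt⟩, rfl⟩, hND D ⟨hD, hDt⟩⟩⟩

lemma ncard_preimage_subtype_le_exNumFam {V : Type*} [AddCommGroup V] [Module (ZMod 2) V]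
    [Fintype V] (hdim : ∀ N ∈ 𝒩, k ≤ N.1) {D₀ : Σ k : ℕ, Set (Fin k → ZMod 2)}
    (hD₀ : D₀ ∈ decompFam 𝒩 k) (hs : D₀.1 ≤ s + 1)
    (hind : LinearIndependent (ZMod 2) ((↑) : D₀.2 → Fin D₀.1 → ZMod 2)) {d : ℕ}
    (hd : ∀ D ∈ decompFam 𝒩 k, D.1 ≤ s + 1 → ∃ N ∈ 𝒩, N.1 ≤ d ∧ HasSectionIn N.2 k D.2)
    (hdV : d ≤ Module.finrank (ZMod 2) V) {M : Set V} (hM : 0 ∉ M)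
    (hfree : ∀ N ∈ 𝒩, ¬ HasRestriction N.2 M) {F : Submodule (ZMod 2) V}
    (hF : Module.finrank (ZMod 2) F + k = Module.finrank (ZMod 2) V)
    (hFM : 2 ^ d * ((F : Set V)ᶜ \ M).ncard < Fintype.card F) :
    (F.subtype ⁻¹' M).ncard ≤ exNumFam (decompFam 𝒩 k) s := by
  refine ncard_le_exNumFam_of_linearIndependent
    (fun D hD => span_eq_top_of_mem_decompFam hdim hD) hD₀ hs hind (by simpa) fun D hD hDs h => ?_
  obtain ⟨N, hN, hNd, hND⟩ := hd D hD hDs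
  refine hfree N hN (hND.hasRestriction (by simpa using hNd.trans hdV) hF ?_ h)
  calc Fintype.card (Fin N.1 → ZMod 2) * ((F : Set V)ᶜ \ M).ncard
      ≤ 2 ^ d * ((F : Set V)ᶜ \ M).ncard := by
        gcongr
        simpa using Nat.pow_le_pow_right two_pos hNd
    _ < Fintype.card F := hFM

end Bounds

section UpperBound

lemma two_pow_mul_density_compl_le_one {k n : ℕ} (hkn : k ≤ n) {M : Set (Fin n → ZMod 2)}
    (hM : 2 ^ n - 2 ^ (n - k) ≤ M.ncard) : 2 ^ k * density Mᶜ ≤ 1 := by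
  have hcompl : Mᶜ.ncard ≤ 2 ^ (n - k) := by
    have := M.ncard_add_ncard_compl
    simp only [Nat.card_eq_fintype_card, Fintype.card_pi, ZMod.card, Finset.prod_const,
      Finset.card_univ, Fintype.card_fin] at this
    omega
  rw [density_eq_ncard_div, mul_div_assoc', div_le_one (by positivity)]
  calc (2 : ℝ) ^ k * Mᶜ.ncard ≤ 2 ^ k * 2 ^ (n - k) := by
        gcongr
        exact_mod_cast hcompl
    _ = Fintype.card (Fin n → ZMod 2) := by simp [← pow_add, Nat.add_sub_cancel' hkn]

lemma two_pow_mul_ncard_lt_card {V : Type*} [AddCommGroup V] [Module (ZMod 2) V] [Fintype V]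
    {d k : ℕ} {F : Submodule (ZMod 2) V}
    (hF : Module.finrank (ZMod 2) F + k = Module.finrank (ZMod 2) V) {S : Set V}
    (hS : density S ≤ 1 / 2 ^ (d + k + 1)) : 2 ^ d * S.ncard < Fintype.card F := by
  have hF : Fintype.card V = 2 ^ k * Fintype.card F := by
    rw [card_eq_two_pow_finrank V, card_eq_two_pow_finrank F, ← hF, ← pow_add, add_comm]
  have hle : 2 ^ (d + k + 1) * S.ncard ≤ Fintype.card V := by
    rw [density_eq_ncard_div, div_le_div_iff₀ (by positivity) (by positivity), one_mul,
      mul_comm] at hS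
    exact_mod_cast hS
  have hle : 2 * (2 ^ d * S.ncard) ≤ Fintype.card F := by
    refine Nat.le_of_mul_le_mul_left ?_ (show 0 < 2 ^ k by positivity)
    calc 2 ^ k * (2 * (2 ^ d * S.ncard)) = 2 ^ (d + k + 1) * S.ncard := by ring
      _ ≤ 2 ^ k * Fintype.card F := hle.trans hF.le
  have hpos : 0 < Fintype.card F := Fintype.card_pos
  omega

variable {𝒩 : Set (Σ k : ℕ, Set (Fin k → ZMod 2))} {k s : ℕ}

theorem exists_exNumFam_le_add_exNumFam_decompFam (h𝒩 : ∀ N ∈ 𝒩, 0 ∉ N.2)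
    (hdim : ∀ N ∈ 𝒩, k ≤ N.1) (hcrit : ∃ N ∈ 𝒩, critNum N.2 ≤ k + 1)
    {D : Σ k : ℕ, Set (Fin k → ZMod 2)} (hD : D ∈ decompFam 𝒩 k) (hs : D.1 ≤ s + 1)
    (hind : LinearIndependent (ZMod 2) ((↑) : D.2 → Fin D.1 → ZMod 2)) :
    ∃ n₀, ∀ n ≥ n₀, exNumFam 𝒩 n ≤ 2 ^ n - 2 ^ (n - k) + exNumFam (decompFam 𝒩 k) s := by
  obtain ⟨N, hN, hNk⟩ := hcrit
  obtain ⟨d, hd⟩ := exists_forall_mem_decompFam_hasSectionIn hdim (s + 1)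
  obtain ⟨n₀, hn₀⟩ := exists_submodule_density_compl_diff_le k N.1
    (ε := 1 / 2 ^ (d + k + 1)) (by positivity)
  refine ⟨max n₀ (max d k), fun n hn => exNumFam_le fun M hM hfree => ?_⟩
  obtain ⟨hn₀n, hdn, hkn⟩ : n₀ ≤ n ∧ d ≤ n ∧ k ≤ n := by simpa using hn
  obtain hsmall | hlarge := le_total M.ncard (2 ^ n - 2 ^ (n - k))
  · exact hsmall.trans (Nat.le_add_right _ _)
  obtain ⟨F, hF, hFM⟩ := hn₀ (Fin n → ZMod 2) (by simpa) M
    (fun hB => hfree N hN (hB.hasRestriction hM (h𝒩 N hN) hNk))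
    (two_pow_mul_density_compl_le_one hkn hlarge)
  have hFn : Module.finrank (ZMod 2) F = n - k := by
    rw [Module.finrank_fin_fun] at hF
    omega
  have hMF : (M ∩ F).ncard = (F.subtype ⁻¹' M).ncard := by
    rw [← Set.ncard_image_of_injective _ F.subtype_injective, Set.image_preimage_eq_inter_range,
      Submodule.coe_subtype, Subtype.range_coe]
  calc M.ncard = (M \ F).ncard + (F.subtype ⁻¹' M).ncard := by
        rw [← hMF, add_comm, Set.ncard_inter_add_ncard_sdiff_eq_ncard]
    _ ≤ ((F : Set (Fin n → ZMod 2))ᶜ).ncard + (F.subtype ⁻¹' M).ncard :=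
      Nat.add_le_add_right (Set.ncard_le_ncard fun _ hx => hx.2) _
    _ ≤ 2 ^ n - 2 ^ (n - k) + exNumFam (decompFam 𝒩 k) s := by
      rw [ncard_compl_submodule, Module.finrank_fin_fun, hFn]
      gcongr
      exact ncard_preimage_subtype_le_exNumFam hdim hD hs hind hd (by simpa) hM hfree hF
        (two_pow_mul_ncard_lt_card hF hFM)

end UpperBound

theorem finite_problem_general (𝒩 : Set (Σ k : ℕ, Set (Fin k → ZMod 2)))
    (h𝒩 : ∀ N ∈ 𝒩, 0 ∉ N.2) (k : ℕ) (hk1 : ∀ N ∈ 𝒩, k + 1 ≤ critNum N.2)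
    (hk2 : ∃ N ∈ 𝒩, critNum N.2 = k + 1) (t : ℕ)
    (h1 : ∃ N ∈ 𝒩, ∃ I : Set (Fin N.1 → ZMod 2), I ⊆ N.2 ∧ I.ncard = t ∧
      LinearIndependent (ZMod 2) ((↑) : I → (Fin N.1 → ZMod 2)) ∧
      critNum (N.2 \ I) ≤ k) :
    ∃ n₀ : ℕ, ∀ n ≥ n₀,
      exNumFam 𝒩 n = 2 ^ n - 2 ^ (n - k) + exNumFam (decompFam 𝒩 k) (t - 1) := by
  have hdim (N) (hN : N ∈ 𝒩) : k ≤ N.1 :=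
    (Nat.le_of_succ_le (hk1 N hN)).trans (critNum_le_dim (h𝒩 N hN))
  obtain ⟨N, hN, I, -, hIt, hI, hNI⟩ := h1
  obtain ⟨D, hD, hDI, hind⟩ :=
    exists_mem_decompFam_linearIndependent hdim hN (h𝒩 N hN) hI hNI
  have hcrit : ∃ N ∈ 𝒩, critNum N.2 ≤ k + 1 := hk2.imp fun _ h => h.imp_right Eq.le
  obtain ⟨n₀, hn₀⟩ := exists_exNumFam_le_add_exNumFam_decompFam (s := t - 1) h𝒩 hdim hcrit hD
    (by omega) hind
  refine ⟨max n₀ (t - 1 + k), fun n hn => ?_⟩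
  obtain ⟨hn₀n, htn⟩ := max_le_iff.1 hn
  exact (hn₀ n hn₀n).antisymm (add_exNumFam_decompFam_le h𝒩 hk1 hdim htn)

/-- Reduction to a finite problem: the error term is `ex(𝒟(𝒩), t − 1)` where `t` is
the smallest size of an independent set whose deletion drops the critical number. -/
theorem finite_problem (𝒩 : Set (Σ k : ℕ, Set (Fin k → ZMod 2)))
    (h𝒩ne : 𝒩.Nonempty) (h𝒩fin : 𝒩.Finite)
    (h𝒩mat : ∀ N ∈ 𝒩, 0 ∉ N.2 ∧ N.2.Nonempty)
    (k : ℕ) (hk1 : ∀ N ∈ 𝒩, k + 1 ≤ critNum N.2) (hk2 : ∃ N ∈ 𝒩, critNum N.2 = k + 1)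
    (t : ℕ)
    (h1 : ∃ N ∈ 𝒩, ∃ I : Set (Fin N.1 → ZMod 2), I ⊆ N.2 ∧ I.ncard = t ∧
      LinearIndependent (ZMod 2) ((↑) : I → (Fin N.1 → ZMod 2)) ∧
      critNum (N.2 \ I) ≤ k)
    (hmin : ∀ N ∈ 𝒩, ∀ I : Set (Fin N.1 → ZMod 2), I ⊆ N.2 →
      LinearIndependent (ZMod 2) ((↑) : I → (Fin N.1 → ZMod 2)) →
      critNum (N.2 \ I) ≤ k → t ≤ I.ncard) :
    ∃ n₀ : ℕ, ∀ n ≥ n₀,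
      exNumFam 𝒩 n = 2 ^ n - 2 ^ (n - k) + exNumFam (decompFam 𝒩 k) (t - 1) :=
  finite_problem_general 𝒩 (fun N hN => (h𝒩mat N hN).1) k hk1 hk2 t h1
end

section
/- Let G be a finite simple nonbipartite cubic (3-regular) graph, and let ν = |E(G)| − c, where c is the maximum number of edges in a cut of G (so that removing from G the ν edges not in a maximum cut, which form a matching, leaves a bipartite graph). Then for all sufficiently large n, ex({M(G)}, n) = 2^{n−1} + 2^{ν−1} − 1. -/
open scoped Classical

/-!
For `f : V → 𝔽₂` let `G_f` be the graph of monochromatic edges of `G`; the minimum of `|E(G_f)|` is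
`ν`. Recolouring a vertex with two monochromatic edges costs one of them and does not raise the rank
of `M(G_f)`, so the minimum is attained at a matching, and every `M(G_f)` has rank at least `ν`.

*Lower bound.* Take the complement of a hyperplane `P` together with the nonzero vectors of a
subspace `Z ≤ P` of dimension `ν - 1`. A copy of `M(G)` in it colours `V` by membership in `P`, and
`Z` would contain a copy of the corresponding `M(G_f)`, whose rank is too large.

*Upper bound.* Let `f` be such that `G_f` is a matching. Then `G` is 4-colourable, and
an `M(G)`-free matroid `M` with at least half of the vectors of a large space `X` contains almost
all of a nontrivial coset `q + P` of some hyperplane `P`. If moreover `2|M| ≥ |X| + 2^ν`, then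
`M ∩ P` contains `ν` independent vectors, onto which the edges of `G_f` can be mapped; a random
translation of the vertices by vectors of `P`, constant on the components of `G_f`, sends the other
edges into `q + P` and, with positive probability, into `M`.
-/

/-! ### Densities of a set on the cosets of a subspace -/

section CosetDensity

variable {X : Type*} [AddCommGroup X] [Module (ZMod 2) X]

/-- The proportion of the coset `x + W` that lies in `M`. -/
noncomputable def cosetDensity (M : Set X) (W : Submodule (ZMod 2) X) (x : X) : ℝ :=
  {y : W | x + y ∈ M}.ncard / Nat.card W

variable (M : Set X) (W : Submodule (ZMod 2) X)

lemma cosetDensity_add_of_mem (x : X) {w : X} (hw : w ∈ W) :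
    cosetDensity M W (x + w) = cosetDensity M W x := by
  have hpre : {y : W | x + w + y ∈ M} = (⟨w, hw⟩ + ·) ⁻¹' {y : W | x + y ∈ M} := by
    ext y
    simp [add_assoc]
  have hbij := AddGroup.addLeft_bijective (⟨w, hw⟩ : W)
  rw [cosetDensity, hpre, Set.ncard_preimage_of_injective_subset_range hbij.injective
    (by simp [hbij.surjective.range_eq]), cosetDensity]

variable [Finite X]

lemma cosetDensity_mul_natCard (x : X) :
    cosetDensity M W x * Nat.card W = {y : W | x + y ∈ M}.ncard :=
  div_mul_cancel₀ _ (by exact_mod_cast Nat.card_pos.ne')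

lemma cosetDensity_le_one (x : X) : cosetDensity M W x ≤ 1 :=
  div_le_one_of_le₀ (by exact_mod_cast Set.ncard_le_card _) (by positivity)

lemma cosetDensity_compl (x : X) : cosetDensity Mᶜ W x = 1 - cosetDensity M W x := by
  have hcard := Set.ncard_add_ncard_compl {y : W | x + y ∈ M}
  have hpos : (Nat.card W : ℝ) ≠ 0 := by exact_mod_cast Nat.card_pos.ne'
  rw [eq_sub_iff_add_eq, add_comm, cosetDensity, cosetDensity, ← add_div, div_eq_one_iff_eq hpos]
  exact_mod_cast hcard

variable {M W} in
lemma cosetDensity_eq_one {x : X} (h : ∀ w ∈ W, x + w ∈ M) : cosetDensity M W x = 1 := by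
  have huniv : {y : W | x + y ∈ M} = Set.univ := Set.eq_univ_of_forall fun y => h y y.2
  rw [cosetDensity, huniv, Set.ncard_univ, div_self (by exact_mod_cast Nat.card_pos.ne')]

lemma cosetDensity_singleton_le (x z : X) : cosetDensity {z} W x ≤ 1 / Nat.card W := by
  have hsub : {y : W | x + y ∈ ({z} : Set X)}.ncard ≤ 1 :=
    (Set.ncard_le_one (Set.toFinite _)).mpr fun a ha b hb =>
      Subtype.ext (add_left_cancel (ha.trans hb.symm))
  unfold cosetDensity
  gcongr
  exact_mod_cast hsub

lemma sum_cosetDensity {F : Finset X} (hF : ∀ x ∈ F, ∀ w ∈ W, x + w ∈ F) :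
    ∑ x ∈ F, cosetDensity M W x = (F.filter (· ∈ M)).card := by
  have := Fintype.ofFinite W
  have hncard (x : X) : {y : W | x + y ∈ M}.ncard = ∑ y : W, if x + y ∈ M then 1 else 0 := by
    rw [← Finset.card_filter, ← Set.ncard_coe_finset, Finset.coe_filter_univ]
  have hshift (y : W) : ∑ x ∈ F, (if x + y ∈ M then 1 else 0) = (F.filter (· ∈ M)).card := by
    rw [Finset.card_filter]
    refine Finset.sum_nbij' (· + (y : X)) (· - (y : X)) (fun x hx => hF x hx y y.2)
      (fun x hx => ?_) (by simp) (by simp) (by simp)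
    simpa [sub_eq_add_neg] using hF x hx _ (W.neg_mem y.2)
  have hcount : ∑ x ∈ F, {y : W | x + y ∈ M}.ncard = Nat.card W * (F.filter (· ∈ M)).card := by
    simp only [hncard]
    rw [Finset.sum_comm, Finset.sum_congr rfl fun y _ => hshift y]
    simp
  unfold cosetDensity
  rw [← Finset.sum_div, div_eq_iff (by exact_mod_cast Nat.card_pos.ne'), mul_comm]
  exact_mod_cast hcount

variable {W} in
lemma ncard_sdiff_eq_cosetDensity_mul {q : X} (hW : 2 * Nat.card W = Nat.card X) (hq : q ∉ W) :
    ((M \ W).ncard : ℝ) = cosetDensity M W q * Nat.card W := by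
  have hindex : W.toAddSubgroup.index = 2 := by
    refine Nat.eq_of_mul_eq_mul_left (Nat.card_pos (α := W)) ?_
    rw [mul_comm _ 2, hW]
    exact W.toAddSubgroup.card_mul_index
  have himage : (fun y : W => q + y) '' {y : W | q + y ∈ M} = M \ W := by
    ext x
    constructor
    · rintro ⟨y, hy, rfl⟩
      exact ⟨hy, fun h => hq ((W.add_mem_iff_left y.2).mp h)⟩
    · rintro ⟨hxM, hxW⟩
      have hqx : -q + x ∈ W := (W.toAddSubgroup.add_mem_iff_of_index_two hindex).mpr
        (iff_of_false (by simpa using hq) hxW)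
      exact ⟨⟨-q + x, hqx⟩, by simpa using hxM, by simp⟩
  have hinj : Function.Injective fun y : W => q + y :=
    (add_right_injective q).comp Subtype.val_injective
  rw [cosetDensity_mul_natCard, ← himage, Set.ncard_image_of_injective _ hinj]

end CosetDensity

/-! ### Random embeddings -/

section RandomEmbedding

lemma exists_forall_notMem_of_sum_lt_one {Ω κ : Type*} [Finite Ω] [Nonempty Ω] [Fintype κ]
    {B : κ → Set Ω} {b : κ → ℝ} (hB : ∀ i, ((B i).ncard : ℝ) ≤ b i * Nat.card Ω)
    (hb : ∑ i, b i < 1) : ∃ ω, ∀ i, ω ∉ B i := by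
  by_contra! hcover
  have huniv : ⋃ i, B i = Set.univ := Set.eq_univ_of_forall fun ω => Set.mem_iUnion.mpr (hcover ω)
  have hpos : (0 : ℝ) < Nat.card Ω := by exact_mod_cast Nat.card_pos
  have hle : (Nat.card Ω : ℝ) ≤ ∑ i, ((B i).ncard : ℝ) := by
    rw [← Set.ncard_univ, ← huniv]
    exact_mod_cast Set.ncard_iUnion_le_of_fintype B
  have hlt := hle.trans (Finset.sum_le_sum fun i _ => hB i)
  rw [← Finset.sum_mul] at hlt
  nlinarith

lemma ncard_preimage_mul_natCard {A B : Type*} [AddGroup A] [AddGroup B] [Finite A]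
    {φ : A →+ B} (hφ : Function.Surjective φ) (S : Set B) :
    (φ ⁻¹' S).ncard * Nat.card B = S.ncard * Nat.card A := by
  have := Fintype.ofFinite A
  have := Finite.of_surjective φ hφ
  have := Fintype.ofFinite B
  have hfiber (T : Finset B) :
      (Finset.univ.filter (φ · ∈ T)).card = T.card * (Finset.univ.filter (φ · = 0)).card := by
    rw [Finset.card_eq_sum_card_fiberwise (f := φ) (t := T) fun a ha => by simpa using ha,
      Finset.sum_const_nat]
    intro b hb
    rw [← AddMonoidHom.card_fiber_eq_of_mem_range φ (hφ b) (hφ 0), Finset.filter_filter]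
    congr 1 with a
    simp only [Finset.mem_filter]
    grind
  have hA := hfiber Finset.univ
  have hS := hfiber S.toFinset
  simp only [Finset.mem_univ, Finset.filter_true, Finset.card_univ] at hA
  have hpre : (φ ⁻¹' S).ncard = (Finset.univ.filter (φ · ∈ S.toFinset)).card := by
    rw [← Set.ncard_coe_finset]
    simp [Set.preimage]
  rw [hpre, hS, Set.ncard_eq_toFinset_card', Nat.card_eq_fintype_card, Nat.card_eq_fintype_card, hA]
  ring

variable {X : Type*} [AddCommGroup X] [Module (ZMod 2) X]

lemma hasRestriction_of_linearIndependent_s14 {V : Type*} [Finite V] [DecidableEq V]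
    {G : SimpleGraph V} {M : Set X} {x : V → X} (hx : LinearIndependent (ZMod 2) x)
    (hM : ∀ u v, G.Adj u v → x u + x v ∈ M) : HasRestriction (cycleMatroid G) M := by
  have := Fintype.ofFinite V
  refine ⟨Fintype.linearCombination (ZMod 2) x,
    linearIndependent_iff_injective_fintypeLinearCombination.mp hx, ?_⟩
  rintro _ ⟨_, ⟨u, v, huv, rfl⟩, rfl⟩
  simpa [Fintype.linearCombination_apply_single] using hM u v huv

variable [Finite X]

lemma ncard_setOf_add_sum_smul_mem {ι : Type*} [Fintype ι] (M : Set X)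
    (W : Submodule (ZMod 2) X) (x : X) {d : ι → ZMod 2} (hd : d ≠ 0) :
    ({w : ι → W | x + ∑ i, d i • (w i : X) ∈ M}.ncard : ℝ) =
      cosetDensity M W x * Nat.card (ι → W) := by
  obtain ⟨i₀, hi₀⟩ := Function.ne_iff.mp hd
  let φ : (ι → W) →ₗ[ZMod 2] W := ∑ i, d i • LinearMap.proj i
  have hφ (w : ι → W) : φ w = ∑ i, d i • w i := by simp [φ]
  have hsurj : Function.Surjective φ := by
    intro b
    refine ⟨Pi.single i₀ ((d i₀)⁻¹ • b), ?_⟩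
    rw [hφ, Finset.sum_eq_single i₀ (fun i _ hi => by simp [hi]) (by simp)]
    simpa using smul_inv_smul₀ hi₀ b
  have hcount := ncard_preimage_mul_natCard (φ := φ.toAddMonoidHom) hsurj {y | x + y ∈ M}
  have hpre : φ.toAddMonoidHom ⁻¹' {y | x + y ∈ M} =
      {w : ι → W | x + ∑ i, d i • (w i : X) ∈ M} := by
    ext w
    simp [hφ]
  rw [hpre] at hcount
  rw [cosetDensity, div_mul_eq_mul_div, eq_div_iff (by exact_mod_cast Nat.card_pos.ne')]
  exact_mod_cast hcount

lemma ncard_setOf_add_add_notMem_le {ι : Type*} [Finite ι] {M : Set X}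
    {W : Submodule (ZMod 2) X} {x : X} {i j : ι} (hij : i ≠ j) {δ : ℝ}
    (hM : 1 - δ ≤ cosetDensity M W x) :
    ({w : ι → W | x + (w i + w j) ∉ M}.ncard : ℝ) ≤ δ * Nat.card (ι → W) := by
  have := Fintype.ofFinite ι
  have hd : Pi.single i 1 + Pi.single j 1 ≠ (0 : ι → ZMod 2) := fun h => by
    simpa [hij] using congrFun h i
  have hcount := ncard_setOf_add_sum_smul_mem Mᶜ W x hd
  simp only [Pi.add_apply, add_smul, Finset.sum_add_distrib, Pi.single_apply, ite_smul, one_smul,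
    zero_smul, Finset.sum_ite_eq', Finset.mem_univ, if_true, Set.mem_compl_iff,
    cosetDensity_compl] at hcount
  rw [hcount]
  gcongr
  linarith

lemma ncard_setOf_add_sum_smul_eq_zero_le {ι : Type*} [Fintype ι] (W : Submodule (ZMod 2) X)
    {x : X} {d : ι → ZMod 2} (hx : d = 0 → x ≠ 0) :
    ({w : ι → W | x + ∑ i, d i • (w i : X) = 0}.ncard : ℝ) ≤
      1 / Nat.card W * Nat.card (ι → W) := by
  by_cases hd : d = 0
  · have hempty : {w : ι → W | x + ∑ i, d i • (w i : X) = 0} = ∅ := by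
      simp [hd, hx hd]
    rw [hempty, Set.ncard_empty, Nat.cast_zero]
    positivity
  · have hcount := ncard_setOf_add_sum_smul_mem {0} W x hd
    simp only [Set.mem_singleton_iff] at hcount
    rw [hcount]
    gcongr
    exact cosetDensity_singleton_le W x 0

lemma sum_smul_add_comp {V ι R A : Type*} [Fintype V] [Fintype ι] [DecidableEq ι] [Semiring R]
    [AddCommMonoid A] [Module R A] (c : V → R) (p : V → A) (r : V → ι) (w : ι → A) :
    ∑ v, c v • (p v + w (r v)) = ∑ v, c v • p v + ∑ i, (∑ v with r v = i, c v) • w i := by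
  simp only [smul_add, Finset.sum_add_distrib, Finset.sum_smul]
  rw [← Finset.sum_fiberwise Finset.univ r fun v => c v • w (r v)]
  congr! 3 with i _ v hv
  rw [(Finset.mem_filter.mp hv).2]

/- Take `x v = p v + w (r v)` with `w : ι → W` uniformly random: an edge joining two different
fibres of `r` fails with probability at most `δ`, and each nontrivial linear relation holds with
probability at most `1 / |W|`. -/
lemma hasRestriction_of_cosetDensity {V ι : Type*} [Fintype V] [DecidableEq V] [Finite ι]
    [DecidableEq ι] {G : SimpleGraph V} {M : Set X} {W : Submodule (ZMod 2) X} (r : V → ι)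
    (p : V → X) {δ : ℝ} (hδ₀ : 0 ≤ δ) (hδ : (Fintype.card V : ℝ) ^ 2 * δ < 1 / 2)
    (hW : Fintype.card V < Module.finrank (ZMod 2) W)
    (hedge : ∀ u v, G.Adj u v → (r u = r v ∧ p u + p v ∈ M) ∨
      (r u ≠ r v ∧ 1 - δ ≤ cosetDensity M W (p u + p v)))
    (hindep : ∀ c : V → ZMod 2, (∀ i, ∑ v with r v = i, c v = 0) → ∑ v, c v • p v = 0 → c = 0) :
    HasRestriction (cycleMatroid G) M := by
  have := Fintype.ofFinite ι
  let x (w : ι → W) (v : V) : X := p v + w (r v)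
  let bad : (V × V) ⊕ (V → ZMod 2) → Set (ι → W) := Sum.elim
    (fun e => {w | G.Adj e.1 e.2 ∧ x w e.1 + x w e.2 ∉ M})
    (fun c => {w | c ≠ 0 ∧ ∑ v, c v • x w v = 0})
  let bound : (V × V) ⊕ (V → ZMod 2) → ℝ := Sum.elim (fun _ => δ) (fun _ => 1 / Nat.card W)
  have hbad (b) : ((bad b).ncard : ℝ) ≤ bound b * Nat.card (ι → W) := by
    obtain ⟨u, v⟩ | c := b
    · by_cases huv : G.Adj u v
      · have hx (w : ι → W) : x w u + x w v = p u + p v + (w (r u) + w (r v)) :=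
          add_add_add_comm _ _ _ _
        obtain ⟨hr, hp⟩ | ⟨hr, hp⟩ := hedge u v huv
        · simpa [bad, bound, hx, hr, ZModModule.add_self, hp] using by positivity
        · simpa only [bad, bound, Sum.elim_inl, hx, huv, true_and] using
            ncard_setOf_add_add_notMem_le hr hp
      · simpa [bad, bound, huv] using by positivity
    · by_cases hc : c = 0
      · simp [bad, bound, hc]
      · have hsum (w : ι → W) := sum_smul_add_comp c p r fun i => (w i : X)
        simpa only [bad, bound, Sum.elim_inr, x, hsum, ne_eq, hc, not_false_eq_true, true_and] using
          ncard_setOf_add_sum_smul_eq_zero_le W fun hd hp => hc (hindep c (congrFun hd) hp)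
  have hcardW : (2 : ℝ) ^ Fintype.card V * (1 / Nat.card W) ≤ 1 / 2 := by
    rw [Module.natCard_eq_pow_finrank (K := ZMod 2) (V := W), Nat.card_zmod, mul_one_div,
      div_le_div_iff₀ (by positivity) two_pos, one_mul, ← pow_succ]
    exact_mod_cast Nat.pow_le_pow_right two_pos hW
  have htotal : ∑ b, bound b = Fintype.card V ^ 2 * δ + 2 ^ Fintype.card V * (1 / Nat.card W) := by
    simp [bound, sq]
  obtain ⟨w, hw⟩ := exists_forall_notMem_of_sum_lt_one hbad (by linarith)
  refine hasRestriction_of_linearIndependent_s14 (x := x w)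
    (Fintype.linearIndependent_iff.mpr fun c hc => ?_) fun u v huv => ?_
  · exact congrFun (not_not.mp fun hne => hw (.inr c) ⟨hne, hc⟩)
  · exact not_not.mp fun hM => hw (.inl (u, v)) ⟨huv, hM⟩

end RandomEmbedding

/-! ### Affine subspaces in dense sets -/

section Flats

variable {X : Type*} [AddCommGroup X]

lemma sum_card_filter_add_mem [Fintype X] [DecidableEq X] (A B : Finset X) :
    ∑ d, (A.filter fun a => d + a ∈ B).card = A.card * B.card := by
  simp only [Finset.card_filter]
  rw [Finset.sum_comm, ← smul_eq_mul, ← Finset.sum_const]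
  refine Finset.sum_congr rfl fun a _ => ?_
  exact (Equiv.sum_comp (Equiv.addRight a) fun d => if d ∈ B then 1 else 0).trans (by simp)

lemma exists_notMem_le_card_filter_add_mem [Fintype X] {A S : Finset X} {α : ℝ}
    (hα : 0 ≤ α) (hA : α * Fintype.card X ≤ A.card) (hS : 2 * S.card < α ^ 2 * Fintype.card X) :
    ∃ d ∉ S, α ^ 2 / 2 * Fintype.card X ≤ (A.filter fun a => d + a ∈ A).card := by
  by_contra! hfew
  have hpos : (0 : ℝ) < Fintype.card X := by exact_mod_cast Fintype.card_pos
  have hterm (d : X) : ((A.filter fun a => d + a ∈ A).card : ℝ) ≤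
      (if d ∈ S then (Fintype.card X : ℝ) else 0) + α ^ 2 / 2 * Fintype.card X := by
    split_ifs with hd
    · have hle : ((A.filter fun a => d + a ∈ A).card : ℝ) ≤ Fintype.card X := by
        exact_mod_cast Finset.card_le_univ _
      exact hle.trans (le_add_of_nonneg_right (by positivity))
    · rw [zero_add]
      exact (hfew d hd).le
  have htotal : (A.card : ℝ) * A.card ≤
      S.card * Fintype.card X + Fintype.card X * (α ^ 2 / 2 * Fintype.card X) := by
    have hsum := Finset.sum_le_sum fun d (_ : d ∈ Finset.univ) => hterm d
    rw [Finset.sum_add_distrib] at hsum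
    have hcount := sum_card_filter_add_mem A A
    simp only [Finset.sum_ite_mem, Finset.univ_inter, Finset.sum_const, nsmul_eq_mul,
      Finset.card_univ] at hsum
    refine le_trans (le_of_eq ?_) hsum
    exact_mod_cast hcount.symm
  have hsq : (α * Fintype.card X) * (α * Fintype.card X) ≤ (A.card : ℝ) * A.card :=
    mul_self_le_mul_self (by positivity) hA
  nlinarith [hpos]

variable [Module (ZMod 2) X]

lemma add_mem_of_mem_sup_span_singleton {A : Set X} {W : Submodule (ZMod 2) X} {a d w : X}
    (ha : ∀ y ∈ W, a + y ∈ A) (hd : ∀ y ∈ W, d + a + y ∈ A)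
    (hw : w ∈ W ⊔ Submodule.span (ZMod 2) {d}) : a + w ∈ A := by
  obtain ⟨y, hy, z, hz, rfl⟩ := Submodule.mem_sup.mp hw
  obtain ⟨c, rfl⟩ := Submodule.mem_span_singleton.mp hz
  obtain rfl | rfl : c = 0 ∨ c = 1 := (by decide : ∀ c : ZMod 2, c = 0 ∨ c = 1) c
  · simpa using ha y hy
  · convert hd y hy using 1
    rw [one_smul]
    abel

/- If the set `B` of base points of `t`-dimensional flats in `A` is dense, some difference `d`
outside the direction `W` is popular in `B`, and adjoining `d` to `W` raises the dimension. -/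
lemma exists_finrank_eq_forall_card_le (t : ℕ) {ε : ℝ} (hε : 0 < ε) :
    ∃ η > (0 : ℝ), ∃ N : ℕ, ∀ (X : Type*) [AddCommGroup X] [Module (ZMod 2) X] [Finite X],
      N ≤ Nat.card X → ∀ A : Set X, ε * Nat.card X ≤ A.ncard →
        ∃ W : Submodule (ZMod 2) X, Module.finrank (ZMod 2) W = t ∧
          η * Nat.card X ≤ {a | ∀ w ∈ W, a + w ∈ A}.ncard := by
  induction t with
  | zero => exact ⟨ε, hε, 0, fun X _ _ _ _ A hA => ⟨⊥, by simp, by simpa using hA⟩⟩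
  | succ t ih =>
    obtain ⟨η, hη, N, hN⟩ := ih
    obtain ⟨N', hN'⟩ := exists_nat_gt (2 ^ (t + 1) / η ^ 2)
    refine ⟨η ^ 2 / 2, by positivity, max N N', fun X _ _ _ hX A hA => ?_⟩
    obtain ⟨W, hW, hB⟩ := hN X (le_of_max_le_left hX) A hA
    have := Fintype.ofFinite X
    have hcardW : (W : Set X).toFinset.card = 2 ^ t := by
      rw [← Set.ncard_eq_toFinset_card', ← Nat.card_coe_set_eq, SetLike.coe_sort_coe,
        Module.natCard_eq_pow_finrank (K := ZMod 2), hW, Nat.card_zmod]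
    have hsmall : 2 * ((W : Set X).toFinset.card : ℝ) < η ^ 2 * Fintype.card X := by
      have hN'X : (N' : ℝ) ≤ Fintype.card X := by
        rw [← Nat.card_eq_fintype_card]
        exact_mod_cast le_of_max_le_right hX
      rw [hcardW, mul_comm (η ^ 2), ← div_lt_iff₀ (by positivity)]
      push_cast
      rw [← pow_succ']
      exact hN'.trans_le hN'X
    rw [Set.ncard_eq_toFinset_card', Nat.card_eq_fintype_card] at hB
    obtain ⟨d, hd, hdB⟩ := exists_notMem_le_card_filter_add_mem hη.le hB hsmall
    refine ⟨W ⊔ Submodule.span (ZMod 2) {d}, ?_, ?_⟩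
    · rw [Submodule.finrank_sup_span_singleton (by simpa using hd), hW]
    · rw [Nat.card_eq_fintype_card]
      refine hdB.trans (Nat.cast_le.mpr ?_)
      rw [← Set.ncard_coe_finset]
      refine Set.ncard_le_ncard (fun a ha w hw => ?_) (Set.toFinite _)
      obtain ⟨ha, hda⟩ : (∀ y ∈ W, a + y ∈ A) ∧ ∀ y ∈ W, d + a + y ∈ A := by simpa using ha
      exact add_mem_of_mem_sup_span_singleton ha hda hw

lemma exists_finrank_eq_forall_add_mem (t : ℕ) {ε : ℝ} (hε : 0 < ε) :
    ∃ N : ℕ, ∀ (X : Type*) [AddCommGroup X] [Module (ZMod 2) X] [Finite X],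
      N ≤ Nat.card X → ∀ A : Set X, ε * Nat.card X ≤ A.ncard →
        ∃ (W : Submodule (ZMod 2) X) (a : X), Module.finrank (ZMod 2) W = t ∧
          ∀ w ∈ W, a + w ∈ A := by
  obtain ⟨η, hη, N, hN⟩ := exists_finrank_eq_forall_card_le t hε
  refine ⟨N, fun X _ _ _ hX A hA => ?_⟩
  obtain ⟨W, hW, hbase⟩ := hN X hX A hA
  have hX : (0 : ℝ) < Nat.card X := by exact_mod_cast Nat.card_pos
  have hpos : {a | ∀ w ∈ W, a + w ∈ A}.ncard ≠ 0 := by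
    exact_mod_cast (lt_of_lt_of_le (mul_pos hη hX) hbase).ne'
  obtain ⟨a, ha⟩ := Set.nonempty_of_ncard_ne_zero hpos
  exact ⟨W, a, hW, ha⟩

end Flats

/-! ### Dense sum-free sets -/

section SumFree

open scoped Pointwise

variable {X : Type*} [AddCommGroup X]

lemma exists_addSubgroup_of_card_add_lt {A : Finset X}
    (hA : 2 * (A + A).card < 3 * A.card) :
    ∃ H : AddSubgroup X, 2 * Nat.card H < 3 * A.card ∧ ∀ a ∈ A, ∀ b ∈ A, b - a ∈ H := by
  let A' : Finset (Multiplicative X) := A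
  have hA' : ((A' * A').card : ℚ) < (3 / 2 : ℚ) * A'.card := by
    have : (2 * (A' * A').card : ℚ) < 3 * A'.card := by exact_mod_cast hA
    linarith
  obtain ⟨H, _, hcard, hH⟩ := Finset.doubling_lt_three_halves hA'
  refine ⟨Subgroup.toAddSubgroup' H, ?_, fun a ha b hb => ?_⟩
  · have : (2 * Nat.card H : ℚ) < 3 * A'.card := by
      rw [Nat.card_eq_fintype_card]
      linarith
    exact_mod_cast this
  · have hmem : Multiplicative.ofAdd b ∈ Multiplicative.ofAdd a • (H : Set (Multiplicative X)) :=
      (hH (.ofAdd a) ha).1 (Finset.mem_coe.mpr hb)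
    rw [Set.mem_smul_set_iff_inv_smul_mem] at hmem
    rwa [sub_eq_neg_add]

lemma notMem_of_forall_add_notMem [Finite X] {F : Finset X} {H : AddSubgroup X}
    (hF : ∀ x ∈ F, ∀ y ∈ F, x + y ∉ F) (hH : ∀ x ∈ F, ∀ y ∈ F, y - x ∈ H)
    (hcard : Nat.card H < 2 * F.card) : ∀ x ∈ F, x ∉ H := by
  intro x hx hxH
  have hFle (y : X) (hy : y ∈ F) : y ∈ H := by simpa using H.add_mem (hH x hx y hy) hxH
  have hsub : ((F ∪ F.image (x + ·) : Finset X) : Set X) ⊆ H := by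
    intro z hz
    obtain hz | hz := Finset.mem_union.mp (Finset.mem_coe.mp hz)
    · exact hFle z hz
    · obtain ⟨y, hy, rfl⟩ := Finset.mem_image.mp hz
      exact H.add_mem hxH (hFle y hy)
  have hdisj : Disjoint F (F.image (x + ·)) := Finset.disjoint_right.mpr fun z hz => by
    obtain ⟨y, hy, rfl⟩ := Finset.mem_image.mp hz
    exact hF x hx y hy
  have hle : (F ∪ F.image (x + ·)).card ≤ Nat.card H := by
    rw [← Set.ncard_coe_finset]
    exact Set.ncard_le_ncard hsub (Set.toFinite _)
  rw [Finset.card_union_of_disjoint hdisj,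
    Finset.card_image_of_injective _ (add_right_injective x)] at hle
  omega

/- The sumset of `F` misses `F`, so the density of `F` forces a doubling below `3 / 2`, and `F` lies
in a coset of a subgroup too large to have index `3` or more. -/
lemma exists_submodule_of_forall_add_notMem [Module (ZMod 2) X] [Fintype X] {F : Finset X}
    (hF : ∀ x ∈ F, ∀ y ∈ F, x + y ∉ F) (hcard : 2 * Fintype.card X < 5 * F.card) :
    ∃ P : Submodule (ZMod 2) X, (∀ x ∈ F, x ∉ P) ∧ 2 * Nat.card P = Nat.card X := by
  have hdisj : Disjoint (F + F) F := Finset.disjoint_left.mpr fun z hz => by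
    obtain ⟨x, hx, y, hy, rfl⟩ := Finset.mem_add.mp hz
    exact hF x hx y hy
  have hsumset : (F + F).card + F.card ≤ Fintype.card X := by
    rw [← Finset.card_union_of_disjoint hdisj]
    exact Finset.card_le_univ _
  obtain ⟨H, hcardH, hH⟩ := exists_addSubgroup_of_card_add_lt (A := F) (by omega)
  obtain ⟨a, ha⟩ : F.Nonempty := Finset.card_pos.mp (by omega)
  have hFcard : F.card ≤ Nat.card H := by
    rw [← Set.ncard_coe_finset, ← Nat.card_coe_set_eq]
    exact Nat.card_le_card_of_injective (fun x => ⟨x - a, hH a ha x x.2⟩) fun x y hxy =>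
      Subtype.ext (sub_left_injective (congrArg Subtype.val hxy))
  have hFH := notMem_of_forall_add_notMem hF hH (by omega)
  have hindex : Nat.card H * H.index = Fintype.card X :=
    H.card_mul_index.trans Nat.card_eq_fintype_card
  have hindex_ne_one : H.index ≠ 1 := fun h => hFH a ha (AddSubgroup.index_eq_one.mp h ▸ trivial)
  have hindex_lt : H.index < 3 := by
    by_contra! h
    have := Nat.mul_le_mul_left (Nat.card H) h
    omega
  have hindex_ne_zero : H.index ≠ 0 := AddSubgroup.index_ne_zero_of_finite
  have hindex_eq : H.index = 2 := by omega
  refine ⟨AddSubgroup.toZModSubmodule 2 H, hFH, ?_⟩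
  rw [Nat.card_eq_fintype_card (α := X), ← hindex, hindex_eq, mul_comm]
  rfl

end SumFree

/-! ### Stability -/

section Stability

variable {V : Type*} [DecidableEq V] {G : SimpleGraph V}

/- Colour `G` by `ZMod 2 × ZMod 2` and send `v` to the combination of `a` and `b` given by its
colour: the edges then land in the cosets of `a`, `b` and `a + b`. -/
lemma hasRestriction_of_cosetDensity_triangle [Fintype V] {X : Type*} [AddCommGroup X]
    [Module (ZMod 2) X] [Finite X] (hG : G.Colorable 4) {M : Set X} {W : Submodule (ZMod 2) X}
    {δ : ℝ} (hδ₀ : 0 ≤ δ) (hδ : (Fintype.card V : ℝ) ^ 2 * δ < 1 / 2)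
    (hW : Fintype.card V < Module.finrank (ZMod 2) W) {a b : X} (ha : 1 - δ ≤ cosetDensity M W a)
    (hb : 1 - δ ≤ cosetDensity M W b) (hab : 1 - δ ≤ cosetDensity M W (a + b)) :
    HasRestriction (cycleMatroid G) M := by
  let C : G.Coloring (ZMod 2 × ZMod 2) := hG.toColoring (by simp)
  refine hasRestriction_of_cosetDensity id (fun v => (C v).1 • a + (C v).2 • b) hδ₀ hδ hW
    (fun u v huv => .inr ⟨G.ne_of_adj huv, ?_⟩) fun c hc _ => funext fun v => ?_
  · have hcases : ∀ s t : ZMod 2 × ZMod 2, s ≠ t →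
        s + t = (1, 0) ∨ s + t = (0, 1) ∨ s + t = (1, 1) := by decide
    have hsum : (C u).1 • a + (C u).2 • b + ((C v).1 • a + (C v).2 • b) =
        (C u + C v).1 • a + (C u + C v).2 • b := by
      rw [Prod.fst_add, Prod.snd_add, add_smul, add_smul, add_add_add_comm]
    obtain h | h | h := hcases _ _ (C.valid huv) <;> rw [hsum, h] <;>
      simpa only [one_smul, zero_smul, add_zero, zero_add]
  · simpa [Finset.sum_filter] using hc v

lemma exists_forall_cosetDensity_mul_cosetDensity_add_le [Finite V] (hG : G.Colorable 4)
    {ε : ℝ} (hε : 0 < ε) :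
    ∃ N : ℕ, ∀ (X : Type*) [AddCommGroup X] [Module (ZMod 2) X] [Finite X] (M : Set X)
      (W : Submodule (ZMod 2) X) (u : X), ¬ HasRestriction (cycleMatroid G) M → N ≤ Nat.card W →
        (∀ w ∈ W, u + w ∈ M) → ∀ x, cosetDensity M W x * cosetDensity M W (x + u) ≤ ε := by
  have := Fintype.ofFinite V
  obtain ⟨N, hN⟩ := exists_finrank_eq_forall_add_mem (Fintype.card V + 1) hε
  refine ⟨N, fun X _ _ _ M W u hM hW hu x => ?_⟩
  have := Fintype.ofFinite W
  let A (z : X) : Finset W := Finset.univ.filter fun y => z + y ∈ M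
  have hA (z : X) : cosetDensity M W z * Nat.card W = (A z).card := by
    rw [cosetDensity_mul_natCard, ← Set.ncard_coe_finset, Finset.coe_filter_univ]
  have hfew (w : W) :
      (((A x).filter fun y => w + y ∈ A (x + u)).card : ℝ) ≤ ε * Nat.card W := by
    by_contra! hmany
    rw [← Set.ncard_coe_finset] at hmany
    obtain ⟨W', y, hW', hy⟩ := hN W hW _ hmany.le
    replace hy : ∀ z ∈ W', x + (y + z) ∈ M ∧ x + u + (w + (y + z)) ∈ M := by simpa [A] using hy
    refine hM (hasRestriction_of_cosetDensity_triangle (W := W'.map W.subtype) (δ := 0)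
      (a := x + y) (b := u + w) hG le_rfl (by simp) ?_ ?_ ?_ ?_)
    · rw [Submodule.finrank_map_subtype_eq, hW']
      exact Nat.lt_succ_self _
    all_goals
      rw [cosetDensity_eq_one]
      · simp
      rintro _ ⟨z, hz, rfl⟩
    · simpa only [add_assoc, Submodule.subtype_apply] using (hy z hz).1
    · simpa only [add_assoc, Submodule.subtype_apply] using hu (w + z) (W.add_mem w.2 z.2)
    · convert (hy z hz).2 using 1
      simp only [Submodule.subtype_apply]
      abel
  have hpos : (0 : ℝ) < Nat.card W := by exact_mod_cast Nat.card_pos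
  have hprod : ((A x).card : ℝ) * (A (x + u)).card ≤ Nat.card W * (ε * Nat.card W) := by
    have hsum := Finset.sum_le_sum fun w (_ : w ∈ Finset.univ) => hfew w
    rw [Finset.sum_const, nsmul_eq_mul, Finset.card_univ, ← Nat.card_eq_fintype_card] at hsum
    rw [← Nat.cast_mul, ← sum_card_filter_add_mem, Nat.cast_sum]
    exact hsum
  rw [← hA, ← hA] at hprod
  refine le_of_mul_le_mul_right ?_ (mul_pos hpos hpos)
  linarith

lemma one_sub_mul_card_le_two_mul_card_filter {X : Type*} [AddCommGroup X] [Fintype X] {a : X → ℝ}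
    {δ : ℝ} (hδ : 0 < δ) {u : X} (ha : ∀ x, a x ≤ 1) (hmul : ∀ x, a x * a (x + u) ≤ δ ^ 3)
    (hsum : (Fintype.card X : ℝ) ≤ 2 * ∑ x, a x) :
    (1 - δ) * Fintype.card X ≤ 2 * (Finset.univ.filter fun x => 1 - δ ≤ a x).card := by
  let i (x : X) : ℝ := if 1 - δ ≤ a x then 1 else 0
  have hpoint (x : X) : δ ^ 2 * (1 - i x - i (x + u)) ≤ 1 + δ ^ 3 - a x - a (x + u) := by
    have hx := hmul x
    have hnonneg := mul_nonneg (sub_nonneg.mpr (ha x)) (sub_nonneg.mpr (ha (x + u)))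
    dsimp only [i]
    split_ifs
    all_goals nlinarith
  have htotal := Finset.sum_le_sum fun x (_ : x ∈ Finset.univ) => hpoint x
  have hshift (f : X → ℝ) : ∑ x, f (x + u) = ∑ x, f x := Equiv.sum_comp (Equiv.addRight u) f
  have hi : ∑ x, i x = (Finset.univ.filter fun x => 1 - δ ≤ a x).card := Finset.sum_boole _ _
  simp only [← Finset.mul_sum, Finset.sum_sub_distrib, Finset.sum_add_distrib, hshift, hi,
    Finset.sum_const, Finset.card_univ, nsmul_eq_mul] at htotal
  refine le_of_mul_le_mul_left ?_ (pow_pos hδ 2)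
  linarith

lemma exists_one_sub_le_cosetDensity {X : Type*} [AddCommGroup X] [Module (ZMod 2) X] [Fintype X]
    {M : Set X} {W P : Submodule (ZMod 2) X} {δ : ℝ} (hδ : δ < 1)
    (hP : 2 * Nat.card P = Nat.card X) (hPM : ∀ x, 1 - δ ≤ cosetDensity M W x → x ∉ P)
    (hcard : (1 - δ) * Fintype.card X ≤
      2 * (Finset.univ.filter fun x => 1 - δ ≤ cosetDensity M W x).card) :
    ∃ q ∉ P, 1 - 2 * δ ≤ cosetDensity M P q := by
  set F := Finset.univ.filter fun x => 1 - δ ≤ cosetDensity M W x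
  have hF : ∀ x ∈ F, ∀ w ∈ W, x + w ∈ F := fun x hx w hw => by
    simpa [F, cosetDensity_add_of_mem M W x hw] using hx
  have hXpos : (0 : ℝ) < Fintype.card X := by exact_mod_cast Fintype.card_pos
  obtain ⟨q, hq⟩ : F.Nonempty := by
    rw [← Finset.card_pos]
    have : (0 : ℝ) < F.card := by nlinarith
    exact_mod_cast this
  have hqP : q ∉ P := hPM q (Finset.mem_filter.mp hq).2
  refine ⟨q, hqP, ?_⟩
  have hFM : (1 - δ) * F.card ≤ (F.filter (· ∈ M)).card := by
    rw [← sum_cosetDensity M W hF, mul_comm, ← nsmul_eq_mul]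
    exact Finset.card_nsmul_le_sum _ _ _ fun x hx => (Finset.mem_filter.mp hx).2
  have hMP : ((F.filter (· ∈ M)).card : ℝ) ≤ cosetDensity M P q * Nat.card P := by
    rw [← ncard_sdiff_eq_cosetDensity_mul M hP hqP, ← Set.ncard_coe_finset]
    refine Nat.cast_le.mpr (Set.ncard_le_ncard (fun x hx => ?_) (Set.toFinite _))
    obtain ⟨hxF, hxM⟩ := Finset.mem_filter.mp (Finset.mem_coe.mp hx)
    exact ⟨hxM, hPM x (Finset.mem_filter.mp hxF).2⟩
  have hPX : (Fintype.card X : ℝ) = 2 * Nat.card P := by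
    rw [← Nat.card_eq_fintype_card]
    exact_mod_cast hP.symm
  have hPpos : (0 : ℝ) < Nat.card P := by exact_mod_cast Nat.card_pos
  refine le_of_mul_le_mul_right ?_ hPpos
  nlinarith [mul_le_mul_of_nonneg_left hcard (sub_nonneg.mpr hδ.le), sq_nonneg δ]

/- A dense flat `u + W` in `M` makes the densities of opposite cosets `x + W`, `x + u + W` multiply
to almost `0`; as they average `1 / 2`, about half of the cosets are almost full. The union of
the latter is sum-free, hence avoids a hyperplane. -/
lemma exists_forall_exists_one_sub_le_cosetDensity [Fintype V] (hG : G.Colorable 4) {δ : ℝ}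
    (hδ₀ : 0 < δ) (hδ₁ : δ < 1 / 5) (hδ : (Fintype.card V : ℝ) ^ 2 * δ < 1 / 2) :
    ∃ N : ℕ, ∀ (X : Type*) [AddCommGroup X] [Module (ZMod 2) X] [Finite X], N ≤ Nat.card X →
      ∀ M : Set X, Nat.card X ≤ 2 * M.ncard → ¬ HasRestriction (cycleMatroid G) M →
        ∃ P : Submodule (ZMod 2) X, 2 * Nat.card P = Nat.card X ∧
          ∃ q ∉ P, 1 - 2 * δ ≤ cosetDensity M P q := by
  obtain ⟨N₁, hN₁⟩ := exists_forall_cosetDensity_mul_cosetDensity_add_le hG (pow_pos hδ₀ 3)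
  obtain ⟨N, hN⟩ := exists_finrank_eq_forall_add_mem (max N₁ (Fintype.card V + 1)) one_half_pos
  refine ⟨N, fun X _ _ _ hX M hM hfree => ?_⟩
  have := Fintype.ofFinite X
  have hM' : (Fintype.card X : ℝ) ≤ 2 * M.ncard := by
    rw [← Nat.card_eq_fintype_card]
    exact_mod_cast hM
  obtain ⟨W, u, hW, hu⟩ := hN X hX M (by rw [Nat.card_eq_fintype_card]; linarith)
  have hcardW : N₁ ≤ Nat.card W := by
    rw [Module.natCard_eq_pow_finrank (K := ZMod 2), hW, Nat.card_zmod]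
    exact (le_max_left _ _).trans Nat.lt_two_pow_self.le
  have hsum : ∑ x, cosetDensity M W x = M.ncard := by
    rw [sum_cosetDensity M W (by simp), ← Set.ncard_coe_finset, Finset.coe_filter_univ]
    rfl
  have hfull := one_sub_mul_card_le_two_mul_card_filter hδ₀ (cosetDensity_le_one M W)
    (hN₁ X M W u hfree hcardW hu) (by rwa [hsum])
  obtain ⟨P, hPF, hP⟩ := exists_submodule_of_forall_add_notMem
    (F := Finset.univ.filter fun x => 1 - δ ≤ cosetDensity M W x)
    (fun x hx y hy hxy => hfree (hasRestriction_of_cosetDensity_triangle hG hδ₀.le hδ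
      (hW ▸ le_max_right N₁ (Fintype.card V + 1)) (Finset.mem_filter.mp hx).2
      (Finset.mem_filter.mp hy).2 (Finset.mem_filter.mp hxy).2))
    (by
      have hpos : (0 : ℝ) < Fintype.card X := by exact_mod_cast Fintype.card_pos
      rify
      nlinarith)
  exact ⟨P, hP, exists_one_sub_le_cosetDensity (by linarith) hP
    (fun x hx => hPF x (by simpa using hx)) hfull⟩

end Stability

/-! ### Monochromatic edges of 2-colourings -/

section MonoSubgraph

variable {V : Type*}

/-- The spanning subgraph formed by the edges of `G` whose endpoints get the same colour
under `f`, which need not be a proper colouring. -/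
def monoSubgraph {α : Type*} (G : SimpleGraph V) (f : V → α) : SimpleGraph V where
  Adj u v := G.Adj u v ∧ f u = f v
  symm := ⟨fun _ _ h => ⟨h.1.symm, h.2.symm⟩⟩

variable {G : SimpleGraph V} {f : V → ZMod 2} {v : V}

lemma deleteIncidenceSet_monoSubgraph_update [DecidableEq V] (a : ZMod 2) :
    (monoSubgraph G (Function.update f v a)).deleteIncidenceSet v =
      (monoSubgraph G f).deleteIncidenceSet v := by
  ext x y
  simp only [SimpleGraph.deleteIncidenceSet_adj]
  refine and_congr_left fun ⟨hx, hy⟩ => ?_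
  simp only [monoSubgraph, Function.update_of_ne hx, Function.update_of_ne hy]

variable [Finite V]

lemma ncard_edgeSet_deleteIncidenceSet (H : SimpleGraph V) (v : V) :
    (H.deleteIncidenceSet v).edgeSet.ncard + (H.neighborSet v).ncard = H.edgeSet.ncard := by
  rw [H.edgeSet_deleteIncidenceSet, ← Nat.card_coe_set_eq (H.neighborSet v),
    ← Nat.card_congr (H.incidenceSetEquivNeighborSet v), Nat.card_coe_set_eq]
  exact Set.ncard_sdiff_add_ncard_of_subset (H.incidenceSet_subset v) (Set.toFinite _)

lemma ncard_cut_add_ncard_edgeSet_monoSubgraph {α : Type*} {f : V → α} {S : Set V}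
    (hf : ∀ u v, f u = f v ↔ (u ∈ S ↔ v ∈ S)) :
    {e : Sym2 V | e ∈ G.edgeSet ∧ ∃ u v, e = s(u, v) ∧ u ∈ S ∧ v ∉ S}.ncard +
      (monoSubgraph G f).edgeSet.ncard = G.edgeSet.ncard := by
  have hcut : {e : Sym2 V | e ∈ G.edgeSet ∧ ∃ u v, e = s(u, v) ∧ u ∈ S ∧ v ∉ S} =
      G.edgeSet \ (monoSubgraph G f).edgeSet := by
    ext ⟨a, b⟩
    change G.Adj a b ∧ _ ↔ G.Adj a b ∧ ¬ (G.Adj a b ∧ f a = f b)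
    rw [not_and]
    refine and_congr_right fun hab => ?_
    simp only [hab, hf, true_imp_iff]
    constructor
    · rintro ⟨u, v, h, hu, hv⟩
      obtain ⟨rfl, rfl⟩ | ⟨rfl, rfl⟩ := Sym2.eq_iff.mp h <;> simp [hu, hv]
    · intro h
      by_cases ha : a ∈ S
      · exact ⟨a, b, rfl, ha, fun hb => h (iff_of_true ha hb)⟩
      · exact ⟨b, a, Sym2.eq_swap, by_contra fun hb => h (iff_of_false ha hb), ha⟩
  rw [hcut]
  refine Set.ncard_sdiff_add_ncard_of_subset ?_ (Set.toFinite _)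
  rintro ⟨a, b⟩ hab
  exact hab.1

variable [DecidableEq V]

lemma ncard_neighborSet_monoSubgraph_add_update :
    ((monoSubgraph G f).neighborSet v).ncard +
      ((monoSubgraph G (Function.update f v (f v + 1))).neighborSet v).ncard =
        (G.neighborSet v).ncard := by
  have hiff : ∀ a b : ZMod 2, a + 1 = b ↔ a ≠ b := by decide
  have hflip : (monoSubgraph G (Function.update f v (f v + 1))).neighborSet v =
      G.neighborSet v \ (monoSubgraph G f).neighborSet v := by
    ext w
    simp only [monoSubgraph, SimpleGraph.mem_neighborSet, Set.mem_sdiff, Function.update_self,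
      not_and]
    refine and_congr_right fun hvw => ?_
    rw [Function.update_of_ne hvw.ne', hiff]
    simp [hvw]
  rw [hflip, add_comm]
  exact Set.ncard_sdiff_add_ncard_of_subset (fun w hw => hw.1) (Set.toFinite _)

variable {H : SimpleGraph V}

lemma finrank_cycleMatroid_deleteIncidenceSet_lt (hv : (H.neighborSet v).Nonempty) :
    Set.finrank (ZMod 2) (cycleMatroid (H.deleteIncidenceSet v)) <
      Set.finrank (ZMod 2) (cycleMatroid H) := by
  obtain ⟨w, hw⟩ := hv
  refine Submodule.finrank_lt_finrank_of_lt (SetLike.lt_iff_le_and_exists.mpr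
    ⟨Submodule.span_mono ?_, Pi.single v 1 + Pi.single w 1,
      Submodule.subset_span ⟨v, w, hw, rfl⟩, fun hmem => ?_⟩)
  · rintro _ ⟨a, b, hab, rfl⟩
    exact ⟨a, b, H.deleteIncidenceSet_le v hab, rfl⟩
  · have hle : Submodule.span (ZMod 2) (cycleMatroid (H.deleteIncidenceSet v)) ≤
        LinearMap.ker (LinearMap.proj (R := ZMod 2) (φ := fun _ : V => ZMod 2) v) := by
      rw [Submodule.span_le]
      rintro _ ⟨a, b, hab, rfl⟩
      obtain ⟨-, ha, hb⟩ := SimpleGraph.deleteIncidenceSet_adj.mp hab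
      simp [ha.symm, hb.symm]
    have := hle hmem
    simp [(H.ne_of_adj hw)] at this

lemma finrank_cycleMatroid_le_deleteIncidenceSet_add_one (hv : (H.neighborSet v).Subsingleton) :
    Set.finrank (ZMod 2) (cycleMatroid H) ≤
      Set.finrank (ZMod 2) (cycleMatroid (H.deleteIncidenceSet v)) + 1 := by
  obtain ⟨d, hd⟩ : ∃ d : V → ZMod 2, ∀ w, H.Adj v w → Pi.single v 1 + Pi.single w 1 = d := by
    obtain hv | ⟨w, hw⟩ := hv.eq_empty_or_singleton
    · exact ⟨0, fun w hw => absurd (hv ▸ hw : w ∈ (∅ : Set V)) (Set.notMem_empty w)⟩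
    · exact ⟨_, fun x hx => by rw [(hw ▸ hx : x ∈ ({w} : Set V))]⟩
  have hle : Submodule.span (ZMod 2) (cycleMatroid H) ≤
      Submodule.span (ZMod 2) (cycleMatroid (H.deleteIncidenceSet v)) ⊔ (ZMod 2) ∙ d := by
    rw [Submodule.span_le]
    rintro _ ⟨a, b, hab, rfl⟩
    by_cases ha : a = v
    · subst ha
      exact Submodule.mem_sup_right (hd b hab ▸ Submodule.mem_span_singleton_self _)
    by_cases hb : b = v
    · subst hb
      rw [add_comm]
      exact Submodule.mem_sup_right (hd a hab.symm ▸ Submodule.mem_span_singleton_self _)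
    · exact Submodule.mem_sup_left (Submodule.subset_span
        ⟨a, b, SimpleGraph.deleteIncidenceSet_adj.mpr ⟨hab, ha, hb⟩, rfl⟩)
  calc Set.finrank (ZMod 2) (cycleMatroid H)
      ≤ _ := Submodule.finrank_mono hle
    _ ≤ _ := Submodule.finrank_add_le_finrank_add_finrank _ _
    _ ≤ _ := Nat.add_le_add_left
      (by simpa using finrank_span_le_card (R := ZMod 2) ({d} : Set (V → ZMod 2))) _

lemma ncard_edgeSet_le_finrank_cycleMatroid (hH : ∀ v, (H.neighborSet v).Subsingleton) :
    H.edgeSet.ncard ≤ Set.finrank (ZMod 2) (cycleMatroid H) := by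
  induction hm : H.edgeSet.ncard using Nat.strong_induction_on generalizing H with
  | _ m ih =>
    subst hm
    obtain hempty | ⟨⟨v, w⟩, hvw⟩ := H.edgeSet.eq_empty_or_nonempty
    · simp [hempty]
    have hnbr : (H.neighborSet v).ncard = 1 :=
      Set.ncard_eq_one.mpr ⟨w, (hH v).eq_singleton_of_mem hvw⟩
    have hcard := ncard_edgeSet_deleteIncidenceSet H v
    have hdel := ih _ (by omega) (H := H.deleteIncidenceSet v)
      (fun u => (hH u).anti fun x hx => H.deleteIncidenceSet_le v hx)
      rfl
    have hrank := finrank_cycleMatroid_deleteIncidenceSet_lt (H := H) (v := v) ⟨w, hvw⟩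
    omega

lemma exists_monoSubgraph_subsingleton_neighborSet (hdeg : ∀ v, (G.neighborSet v).ncard ≤ 3)
    (f : V → ZMod 2) :
    ∃ g : V → ZMod 2, (∀ v, ((monoSubgraph G g).neighborSet v).Subsingleton) ∧
      (monoSubgraph G g).edgeSet.ncard ≤ (monoSubgraph G f).edgeSet.ncard ∧
      Set.finrank (ZMod 2) (cycleMatroid (monoSubgraph G g)) ≤
        Set.finrank (ZMod 2) (cycleMatroid (monoSubgraph G f)) := by
  induction hm : (monoSubgraph G f).edgeSet.ncard using Nat.strong_induction_on
    generalizing f with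
  | _ m ih =>
    subst hm
    by_cases hf : ∀ v, ((monoSubgraph G f).neighborSet v).Subsingleton
    · exact ⟨f, hf, le_rfl, le_rfl⟩
    push Not at hf
    obtain ⟨v, hv⟩ := hf
    have htwo : 1 < ((monoSubgraph G f).neighborSet v).ncard :=
      (Set.one_lt_ncard (Set.toFinite _)).mpr hv
    let f' := Function.update f v (f v + 1)
    have hone : ((monoSubgraph G f').neighborSet v).ncard ≤ 1 := by
      have hdegv : _ + ((monoSubgraph G f').neighborSet v).ncard = _ :=
        ncard_neighborSet_monoSubgraph_add_update
      have := hdeg v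
      omega
    have hdel : (monoSubgraph G f').deleteIncidenceSet v = _ :=
      deleteIncidenceSet_monoSubgraph_update (f v + 1)
    have hcard := ncard_edgeSet_deleteIncidenceSet (monoSubgraph G f) v
    have hcard' := ncard_edgeSet_deleteIncidenceSet (monoSubgraph G f') v
    have hrank := finrank_cycleMatroid_deleteIncidenceSet_lt (v := v) hv.nonempty
    have hrank' := finrank_cycleMatroid_le_deleteIncidenceSet_add_one
      (Set.ncard_le_one_iff_subsingleton.mp hone)
    rw [hdel] at hcard' hrank'
    obtain ⟨g, hg, hgcard, hgrank⟩ := ih _ (by omega) f' rfl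
    exact ⟨g, hg, by omega, by omega⟩

end MonoSubgraph

/-! ### Lower bound -/

section LowerBound

variable {X : Type*} [AddCommGroup X] [Module (ZMod 2) X] [Finite X]

lemma ncard_submodule_eq_two_pow_finrank (S : Submodule (ZMod 2) X) :
    (S : Set X).ncard = 2 ^ Module.finrank (ZMod 2) S := by
  rw [← Nat.card_coe_set_eq, SetLike.coe_sort_coe, Module.natCard_eq_pow_finrank (K := ZMod 2),
    Nat.card_zmod]

variable {V : Type*} [Finite V] [DecidableEq V] {G : SimpleGraph V} {M : Set X}

lemma not_hasRestriction_cycleMatroid_of_finrank_lt {π : X →ₗ[ZMod 2] ZMod 2}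
    {Z : Submodule (ZMod 2) X} (hM : ∀ x ∈ M, π x = 0 → x ∈ Z)
    (hZ : ∀ f : V → ZMod 2, Module.finrank (ZMod 2) Z <
      Set.finrank (ZMod 2) (cycleMatroid (monoSubgraph G f))) :
    ¬ HasRestriction (cycleMatroid G) M := by
  rintro ⟨ψ, hψ, hψM⟩
  have hle : Submodule.span (ZMod 2)
      (cycleMatroid (monoSubgraph G fun v => π (ψ (Pi.single v 1)))) ≤ Z.comap ψ := by
    rw [Submodule.span_le]
    rintro _ ⟨u, v, ⟨huv, hπ : π (ψ (Pi.single u 1)) = π (ψ (Pi.single v 1))⟩, rfl⟩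
    refine hM _ (hψM ⟨_, ⟨u, v, huv, rfl⟩, rfl⟩) ?_
    rw [map_add, map_add, hπ, ZModModule.add_self]
  have hcomap : Module.finrank (ZMod 2) (Z.comap ψ) ≤ Module.finrank (ZMod 2) Z :=
    LinearMap.finrank_le_finrank_of_injective
      (f := ψ.restrict (p := Z.comap ψ) (q := Z) fun _ hx => hx)
      fun x y hxy => Subtype.ext (hψ (congrArg Subtype.val hxy))
  exact (hZ _).not_ge ((Submodule.finrank_mono hle).trans hcomap)

lemma exists_not_hasRestriction_cycleMatroid {ν : ℕ} (hν : 0 < ν)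
    (hG : ∀ f : V → ZMod 2, ν ≤ Set.finrank (ZMod 2) (cycleMatroid (monoSubgraph G f)))
    (hX : ν ≤ Module.finrank (ZMod 2) X) :
    ∃ M : Set X, 0 ∉ M ∧ ¬ HasRestriction (cycleMatroid G) M ∧
      2 * M.ncard + 2 = Nat.card X + 2 ^ ν := by
  obtain ⟨b, hb⟩ := exists_linearIndependent_of_le_finrank (R := ZMod 2) (M := X) (n := ν - 1)
    (by omega)
  set Z := Submodule.span (ZMod 2) (Set.range b)
  have hZ : Module.finrank (ZMod 2) Z = ν - 1 := by rw [finrank_span_eq_card hb, Fintype.card_fin]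
  obtain ⟨π, hπ, hZπ⟩ := Submodule.exists_le_ker_of_lt_top Z
    (Submodule.lt_top_of_finrank_lt_finrank (by omega))
  have hker := Module.Dual.finrank_ker_add_one_of_ne_zero hπ
  refine ⟨(LinearMap.ker π : Set X)ᶜ ∪ ((Z : Set X) \ {0}), by simp,
    not_hasRestriction_cycleMatroid_of_finrank_lt (π := π) (Z := Z) ?_ fun f => ?_, ?_⟩
  · rintro x (hx | hx) hx₀
    · exact absurd hx₀ hx
    · exact hx.1
  · have := hG f
    omega
  · have hdisj : Disjoint (LinearMap.ker π : Set X)ᶜ ((Z : Set X) \ {0}) :=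
      Set.disjoint_left.mpr fun x hx hxZ => hx (hZπ hxZ.1)
    rw [Set.ncard_union_eq hdisj,
      Set.ncard_sdiff_singleton_of_mem Z.zero_mem, Set.ncard_compl,
      ncard_submodule_eq_two_pow_finrank, ncard_submodule_eq_two_pow_finrank, hZ,
      Module.natCard_eq_pow_finrank (K := ZMod 2) (V := X), Nat.card_zmod, ← hker]
    obtain ⟨μ, rfl⟩ := Nat.exists_eq_add_of_lt hν
    have := Nat.one_le_two_pow (n := μ)
    simp only [pow_succ, zero_add, Nat.add_sub_cancel]
    omega

end LowerBound

/-! ### Upper bound -/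

section Matching

variable {V A : Type*} {H : SimpleGraph V}

lemma eq_or_adj_of_reachable (hH : ∀ v, (H.neighborSet v).Subsingleton) {u v : V}
    (huv : H.Reachable u v) : u = v ∨ H.Adj u v := by
  obtain ⟨p⟩ := huv
  induction p with
  | nil => exact Or.inl rfl
  | cons h _ ih =>
    obtain rfl | hadj := ih
    · exact Or.inr h
    · exact Or.inl (hH _ h.symm hadj)

lemma eq_mk_of_mem_of_adj (hH : ∀ v, (H.neighborSet v).Subsingleton) {u v : V}
    (huv : H.Adj u v) {e : Sym2 V} (he : e ∈ H.edgeSet) (hu : u ∈ e) : e = s(u, v) := by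
  obtain ⟨w, rfl⟩ := hu
  exact congrArg (fun x => s(u, x)) (hH u he huv)

variable [Fintype V] [AddCommMonoid A]

/-- The labelling of the vertices of `H` that puts the weight `b e` of each edge `e` on one of its
two endpoints, `e.out.1`. On a matching the labels of the endpoints of `e` then add up to `b e`. -/
noncomputable def endpointLabel (H : SimpleGraph V) (b : H.edgeSet → A) (v : V) : A :=
  ∑ e : H.edgeSet with e.1.out.1 = v, b e

lemma endpointLabel_add (hH : ∀ v, (H.neighborSet v).Subsingleton) (b : H.edgeSet → A) {u v : V}
    (huv : H.Adj u v) :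
    endpointLabel H b u + endpointLabel H b v = b ⟨s(u, v), huv⟩ := by
  have hdisj : Disjoint (Finset.univ.filter fun e : H.edgeSet => e.1.out.1 = u)
      (Finset.univ.filter fun e : H.edgeSet => e.1.out.1 = v) :=
    Finset.disjoint_filter.mpr fun e _ hu hv => huv.ne (hu.symm.trans hv)
  have hedge : (Finset.univ.filter fun e : H.edgeSet => e.1.out.1 = u ∨ e.1.out.1 = v) =
      {⟨s(u, v), huv⟩} := by
    ext e
    simp only [Finset.mem_filter, Finset.mem_univ, true_and, Finset.mem_singleton]
    constructor
    · have hmem := e.1.out_fst_mem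
      rintro (h | h) <;> rw [h] at hmem <;> apply Subtype.ext
      · exact eq_mk_of_mem_of_adj hH huv e.2 hmem
      · exact (eq_mk_of_mem_of_adj hH huv.symm e.2 hmem).trans Sym2.eq_swap
    · rintro rfl
      exact Sym2.mem_iff.mp (Sym2.out_fst_mem s(u, v))
  rw [endpointLabel, endpointLabel, ← Finset.sum_union hdisj, ← Finset.filter_or, hedge,
    Finset.sum_singleton]

lemma sum_smul_endpointLabel {R : Type*} [Semiring R] [Module R A] (c : V → R)
    (b : H.edgeSet → A) :
    ∑ v, c v • endpointLabel H b v = ∑ e, c e.1.out.1 • b e := by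
  rw [← Finset.sum_fiberwise Finset.univ fun e : H.edgeSet => e.1.out.1]
  refine Finset.sum_congr rfl fun v _ => ?_
  rw [endpointLabel, Finset.smul_sum]
  exact Finset.sum_congr rfl fun e he => by rw [(Finset.mem_filter.mp he).2]

lemma eq_zero_of_forall_component_sum_eq_zero {R : Type*} [AddCommMonoid R]
    (hH : ∀ v, (H.neighborSet v).Subsingleton) {c : V → R}
    (hcomp : ∀ i, ∑ v with H.connectedComponentMk v = i, c v = 0)
    (htail : ∀ e : H.edgeSet, c e.1.out.1 = 0) : c = 0 := by
  funext v
  by_cases hv : ∃ e : H.edgeSet, e.1.out.1 = v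
  · obtain ⟨e, rfl⟩ := hv
    exact htail e
  · rw [Pi.zero_apply, ← hcomp (H.connectedComponentMk v)]
    refine (Finset.sum_eq_single_of_mem v (by simp) fun w hw hwv => ?_).symm
    have hadj : H.Adj w v := (eq_or_adj_of_reachable hH
      (SimpleGraph.ConnectedComponent.exact (Finset.mem_filter.mp hw).2)).resolve_left hwv
    obtain h | h := Sym2.mem_iff.mp (Sym2.out_fst_mem s(w, v))
    · rw [← h]
      exact htail ⟨s(w, v), hadj⟩
    · exact absurd ⟨⟨s(w, v), hadj⟩, h⟩ hv

end Matching

section UpperBound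

variable {V : Type*} {G : SimpleGraph V} {f : V → ZMod 2}

lemma colorable_four_of_subsingleton_neighborSet [Finite V]
    (hf : ∀ v, ((monoSubgraph G f).neighborSet v).Subsingleton) : G.Colorable 4 := by
  have := Fintype.ofFinite V
  let g : V → ZMod 2 := endpointLabel (monoSubgraph G f) fun _ => 1
  refine (SimpleGraph.Coloring.mk (fun v => (f v, g v)) fun {u v} huv heq => ?_).colorable
  obtain ⟨hfuv, hguv⟩ := Prod.ext_iff.mp heq
  have hg : g u + g v = 1 := endpointLabel_add hf _ ⟨huv, hfuv⟩
  rw [show g u = g v from hguv, ZModModule.add_self] at hg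
  exact zero_ne_one hg

variable {X : Type*} [AddCommGroup X] [Module (ZMod 2) X] [Finite X] {M : Set X}

lemma hasRestriction_of_linearIndependent_edges [Fintype V] [DecidableEq V]
    (hf : ∀ v, ((monoSubgraph G f).neighborSet v).Subsingleton)
    {P : Submodule (ZMod 2) X} {q : X} (hq : q ∉ P) {δ : ℝ} (hδ₀ : 0 ≤ δ)
    (hδ : (Fintype.card V : ℝ) ^ 2 * δ < 1 / 2) (hP : Fintype.card V < Module.finrank (ZMod 2) P)
    (hdense : 1 - δ ≤ cosetDensity M P q) {b : (monoSubgraph G f).edgeSet → X}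
    (hb : LinearIndependent (ZMod 2) b) (hbM : ∀ e, b e ∈ M) (hbP : ∀ e, b e ∈ P) :
    HasRestriction (cycleMatroid G) M := by
  let H := monoSubgraph G f
  have hlabel (v : V) : endpointLabel H b v ∈ P := P.sum_mem fun e _ => hbP e
  refine hasRestriction_of_cosetDensity H.connectedComponentMk
    (fun v => f v • q + endpointLabel H b v) hδ₀ hδ hP (fun u v huv => ?_) fun c hcomp hsum => ?_
  · rw [add_add_add_comm, ← add_smul]
    obtain hfuv | hfuv := eq_or_ne (f u) (f v)
    · have hadj : H.Adj u v := ⟨huv, hfuv⟩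
      rw [hfuv, ZModModule.add_self, zero_smul, zero_add, endpointLabel_add hf b hadj]
      exact Or.inl ⟨SimpleGraph.ConnectedComponent.sound hadj.reachable, hbM _⟩
    · have hone : ∀ x y : ZMod 2, x ≠ y → x + y = 1 := by decide
      rw [hone _ _ hfuv, one_smul, cosetDensity_add_of_mem]
      · refine Or.inr ⟨fun h => hfuv ?_, hdense⟩
        obtain rfl | hadj := eq_or_adj_of_reachable hf (SimpleGraph.ConnectedComponent.exact h)
        · rfl
        · exact hadj.2
      · exact P.add_mem (hlabel u) (hlabel v)
  · simp only [smul_add, Finset.sum_add_distrib, smul_smul, ← Finset.sum_smul] at hsum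
    have hcoeff : ∑ v, c v * f v = 0 := by
      by_contra hne
      have hone : ∑ v, c v * f v = 1 := Fin.eq_one_of_ne_zero _ hne
      rw [hone, one_smul] at hsum
      exact hq (eq_neg_of_add_eq_zero_left hsum ▸
        P.neg_mem (P.sum_mem fun v _ => P.smul_mem _ (hlabel v)))
    rw [hcoeff, zero_smul, zero_add, sum_smul_endpointLabel] at hsum
    exact eq_zero_of_forall_component_sum_eq_zero hf hcomp
      (Fintype.linearIndependent_iff.mp hb _ hsum)

lemma exists_linearIndependent_fin_of_two_pow_le {S : Set X} (hS : 0 ∉ S) {n : ℕ}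
    (hn : 2 ^ n ≤ 2 * S.ncard) :
    ∃ b : Fin n → X, LinearIndependent (ZMod 2) b ∧ ∀ i, b i ∈ S := by
  obtain ⟨b, hbS, -, hb⟩ := Submodule.exists_fun_fin_finrank_span_eq (ZMod 2) S
  have hlt : S.ncard < 2 ^ Module.finrank (ZMod 2) (Submodule.span (ZMod 2) S) := by
    rw [← ncard_submodule_eq_two_pow_finrank]
    exact Set.ncard_lt_ncard ((Set.ssubset_iff_of_subset Submodule.subset_span).mpr
      ⟨0, Submodule.zero_mem _, hS⟩) (Set.toFinite _)
  have hnd : n ≤ Module.finrank (ZMod 2) (Submodule.span (ZMod 2) S) := by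
    rw [← Nat.lt_succ_iff, ← Nat.pow_lt_pow_iff_right Nat.one_lt_two, pow_succ]
    omega
  exact ⟨b ∘ Fin.castLE hnd, hb.comp _ (Fin.castLE_injective hnd), fun i => hbS _⟩

lemma le_two_mul_ncard_inter {P : Submodule (ZMod 2) X} (hP : 2 * Nat.card P = Nat.card X) {k : ℕ}
    (hM : Nat.card X + k ≤ 2 * M.ncard) : k ≤ 2 * (M ∩ P).ncard := by
  have hsplit := Set.ncard_inter_add_ncard_sdiff_eq_ncard M (P : Set X) (Set.toFinite _)
  have hsdiff : (M \ P).ncard ≤ (P : Set X)ᶜ.ncard :=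
    Set.ncard_le_ncard (fun x hx => hx.2) (Set.toFinite _)
  have hcompl := Set.ncard_add_ncard_compl (P : Set X)
  rw [← Nat.card_coe_set_eq, SetLike.coe_sort_coe] at hcompl
  omega

lemma exists_forall_two_mul_ncard_lt [Finite V] [DecidableEq V]
    (hf : ∀ v, ((monoSubgraph G f).neighborSet v).Subsingleton) :
    ∃ N : ℕ, ∀ (X : Type*) [AddCommGroup X] [Module (ZMod 2) X] [Finite X], N ≤ Nat.card X →
      ∀ M : Set X, 0 ∉ M → ¬ HasRestriction (cycleMatroid G) M →
        2 * M.ncard < Nat.card X + 2 ^ (monoSubgraph G f).edgeSet.ncard := by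
  have := Fintype.ofFinite V
  set k := Fintype.card V with hk
  obtain ⟨δ, hδ₀, hδ₁, hδ⟩ : ∃ δ : ℝ, 0 < δ ∧ δ < 1 / 5 ∧ (k : ℝ) ^ 2 * (2 * δ) < 1 / 2 := by
    have hk₀ : (0 : ℝ) ≤ k := k.cast_nonneg
    refine ⟨1 / (8 * (k + 1) ^ 2), by positivity, ?_, ?_⟩
    · rw [div_lt_div_iff₀ (by positivity) (by norm_num)]
      nlinarith [hk₀]
    · field_simp
      nlinarith [hk₀]
  obtain ⟨N, hN⟩ := exists_forall_exists_one_sub_le_cosetDensity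
    (colorable_four_of_subsingleton_neighborSet hf) hδ₀ hδ₁ (by rw [← hk]; nlinarith)
  refine ⟨max N (2 ^ (k + 2)), fun X _ _ _ hX M hM₀ hfree => ?_⟩
  by_contra! hM
  obtain ⟨P, hP, q, hq, hdense⟩ := hN X (le_of_max_le_left hX) M
    ((Nat.le_add_right _ _).trans hM) hfree
  obtain ⟨b, hb, hbMP⟩ := exists_linearIndependent_fin_of_two_pow_le (S := M ∩ P)
    (fun h => hM₀ h.1) (le_two_mul_ncard_inter hP hM)
  have hkP : k < Module.finrank (ZMod 2) P := by
    have hcard : 2 ^ (k + 2) ≤ 2 * Nat.card P := hP ▸ le_of_max_le_right hX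
    rw [Module.natCard_eq_pow_finrank (K := ZMod 2), Nat.card_zmod, ← pow_succ',
      Nat.pow_le_pow_iff_right Nat.one_lt_two] at hcard
    omega
  let e := Finite.equivFinOfCardEq (Nat.card_coe_set_eq (monoSubgraph G f).edgeSet)
  exact hfree (hasRestriction_of_linearIndependent_edges hf hq (by positivity) hδ hkP hdense
    (hb.comp e e.injective) (fun i => (hbMP (e i)).1) fun i => (hbMP (e i)).2)

end UpperBound

section Exact

variable {V : Type*} [Finite V] {G : SimpleGraph V} {ν : ℕ}

lemma isLeast_ncard_edgeSet_monoSubgraph {c : ℕ}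
    (hc : IsGreatest {m : ℕ | ∃ S : Set V,
      m = {e : Sym2 V | e ∈ G.edgeSet ∧ ∃ u v, e = s(u, v) ∧ u ∈ S ∧ v ∉ S}.ncard} c) :
    IsLeast (Set.range fun f : V → ZMod 2 => (monoSubgraph G f).edgeSet.ncard)
      (G.edgeSet.ncard - c) := by
  constructor
  · obtain ⟨S, rfl⟩ := hc.1
    have hcut := ncard_cut_add_ncard_edgeSet_monoSubgraph (G := G) (S := S)
      (f := S.indicator (1 : V → ZMod 2)) fun u v => by
        by_cases hu : u ∈ S <;> by_cases hv : v ∈ S <;> simp [hu, hv]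
    exact ⟨S.indicator 1, by dsimp only; omega⟩
  · rintro _ ⟨f, rfl⟩
    have hiff : ∀ a b : ZMod 2, a = b ↔ (a = 1 ↔ b = 1) := by decide
    have hcut := ncard_cut_add_ncard_edgeSet_monoSubgraph (G := G) (S := {v | f v = 1})
      fun u v => hiff (f u) (f v)
    have hle := hc.2 ⟨{v | f v = 1}, rfl⟩
    dsimp only
    omega

lemma ncard_edgeSet_monoSubgraph_pos (hG : ¬ G.Colorable 2) (f : V → ZMod 2) :
    0 < (monoSubgraph G f).edgeSet.ncard := by
  rw [Set.ncard_pos (Set.toFinite _), Set.nonempty_iff_ne_empty]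
  intro hempty
  refine hG (SimpleGraph.Coloring.mk (α := ZMod 2) f fun {u v} huv hfuv => ?_).colorable
  exact Set.eq_empty_iff_forall_notMem.mp hempty s(u, v) ⟨huv, hfuv⟩

variable [DecidableEq V]

lemma le_finrank_cycleMatroid_monoSubgraph (hdeg : ∀ v, (G.neighborSet v).ncard ≤ 3)
    (hν : ∀ f : V → ZMod 2, ν ≤ (monoSubgraph G f).edgeSet.ncard) (f : V → ZMod 2) :
    ν ≤ Set.finrank (ZMod 2) (cycleMatroid (monoSubgraph G f)) := by
  obtain ⟨g, hg, -, hrank⟩ := exists_monoSubgraph_subsingleton_neighborSet hdeg f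
  exact (hν g).trans ((ncard_edgeSet_le_finrank_cycleMatroid hg).trans hrank)

lemma exists_forall_exNum_cycleMatroid_eq (hν : 0 < ν)
    (hrank : ∀ f : V → ZMod 2, ν ≤ Set.finrank (ZMod 2) (cycleMatroid (monoSubgraph G f)))
    {g : V → ZMod 2} (hg : ∀ v, ((monoSubgraph G g).neighborSet v).Subsingleton)
    (hgν : (monoSubgraph G g).edgeSet.ncard = ν) :
    ∃ n₀ : ℕ, ∀ n ≥ n₀, exNum (cycleMatroid G) n = 2 ^ (n - 1) + 2 ^ (ν - 1) - 1 := by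
  obtain ⟨N, hN⟩ := exists_forall_two_mul_ncard_lt hg
  refine ⟨max N ν, fun n hn => ?_⟩
  have hcard : Nat.card (Fin n → ZMod 2) = 2 ^ n := by simp
  have hn₂ : 2 ^ n = 2 * 2 ^ (n - 1) := (mul_pow_sub_one (by omega) 2).symm
  have hν₂ : 2 ^ ν = 2 * 2 ^ (ν - 1) := (mul_pow_sub_one hν.ne' 2).symm
  obtain ⟨M, hM₀, hfree, hM⟩ := exists_not_hasRestriction_cycleMatroid
    (X := Fin n → ZMod 2) hν hrank (by simpa using le_of_max_le_right hn)
  refine IsGreatest.csSup_eq ⟨⟨M, hM₀, hfree, by omega⟩, ?_⟩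
  rintro _ ⟨M', hM'₀, hfree', rfl⟩
  have hNX : N ≤ Nat.card (Fin n → ZMod 2) :=
    hcard ▸ (le_of_max_le_left hn).trans Nat.lt_two_pow_self.le
  have hM' := hN _ hNX M' hM'₀ hfree'
  rw [hgν] at hM'
  omega

end Exact

theorem cubic_exact_general {V : Type*} [Fintype V] [DecidableEq V] (G : SimpleGraph V)
    [DecidableRel G.Adj]
    (hdeg : ∀ v, G.degree v ≤ 3) (hnb : ¬ G.Colorable 2) (c : ℕ)
    (hc : IsGreatest {m : ℕ | ∃ S : Set V,
      m = {e : Sym2 V | e ∈ G.edgeSet ∧ ∃ u v, e = s(u, v) ∧ u ∈ S ∧ v ∉ S}.ncard} c) :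
    ∃ n₀ : ℕ, ∀ n ≥ n₀,
      exNum (cycleMatroid G) n = 2 ^ (n - 1) + 2 ^ (G.edgeSet.ncard - c - 1) - 1 := by
  have hdeg' (v : V) : (G.neighborSet v).ncard ≤ 3 := by
    rw [← Nat.card_coe_set_eq, Nat.card_eq_fintype_card, G.card_neighborSet_eq_degree]
    exact hdeg v
  obtain ⟨⟨f, hf⟩, hmin⟩ := isLeast_ncard_edgeSet_monoSubgraph hc
  have hν (f : V → ZMod 2) : G.edgeSet.ncard - c ≤ (monoSubgraph G f).edgeSet.ncard :=
    hmin ⟨f, rfl⟩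
  obtain ⟨g, hg, hgf, -⟩ := exists_monoSubgraph_subsingleton_neighborSet hdeg' f
  exact exists_forall_exNum_cycleMatroid_eq (hf ▸ ncard_edgeSet_monoSubgraph_pos hnb f)
    (le_finrank_cycleMatroid_monoSubgraph hdeg' hν) hg ((hgf.trans hf.le).antisymm (hν g))

/-- Exact Turán numbers for cycle matroids of nonbipartite cubic graphs:
`ν = |E(G)| − c` where `c` is the maximum size of a cut. -/
theorem cubic_exact {V : Type*} [Fintype V] [DecidableEq V] (G : SimpleGraph V)
    [DecidableRel G.Adj]
    (hreg : G.IsRegularOfDegree 3) (hnb : ¬ G.Colorable 2) (c : ℕ)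
    (hc : IsGreatest {m : ℕ | ∃ S : Set V,
      m = {e : Sym2 V | e ∈ G.edgeSet ∧ ∃ u v, e = s(u, v) ∧ u ∈ S ∧ v ∉ S}.ncard} c) :
    ∃ n₀ : ℕ, ∀ n ≥ n₀,
      exNum (cycleMatroid G) n = 2 ^ (n - 1) + 2 ^ (G.edgeSet.ncard - c - 1) - 1 :=
  cubic_exact_general G (fun v => (hreg v).le) hnb c hc
end
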